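/- Let F be a graph and let H be one of the graphs house, hammer, diamond. If every (F, C3)-free graph is 3-colorable, then every (F, bull, H)-free graph is perfectly divisible. -/

import Mathlib

/-!
The statement is proved in a weighted form: for every positive weight function `w`, the vertex set
splits into a part `P` inducing a perfect graph and a rest all of whose cliques are lighter than
the heaviest clique (`WDiv`). Perfection is replaced by the formally stronger `WPerf` (every
weighting can be coloured with as many colours as the heaviest clique weighs), for which closure
under substitution, under adding simplicial vertices, and for bipartite graphs is elementary;
weight one returns ordinary perfection, so no deep theorem on perfect graphs is needed.

Take a counterexample `G` with as few vertices as possible.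

* `G` is prime (no nontrivial homogeneous set, `div_of_homog`): contract a homogeneous set `X` to a
  vertex carrying the weight of a heaviest clique of `X`, split the contraction, and, if the new
  vertex falls in the perfect part, substitute the perfect part of a splitting of `X`.
* `G` has no simplicial vertex (`div_of_simplicial`), and the non-neighbours of any vertex `t` do
  not induce a weighted perfect graph: otherwise they form with `t` a perfect part whose removal
  leaves a subset of `N(t)` (`div_of_antiNbhd`). A minimal set `Q` of non-neighbours of `t` that is
  not weighted perfect is a non-bipartite `Core`: prime and without simplicial vertices.
* `G` contains a triangle `t a b`: otherwise it is 3-colourable, two colour classes are the perfect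
  part and the third one is lighter than some edge (`div_of_colorable`).

In a bull-free graph a vertex `x` with a neighbour anticomplete to `Q` is either complete to `Q` or
has a stable trace on `Q`, by primality of `Q`. The first case is excluded because, in a prime
bull-free graph, no core has both a vertex complete to it and one anticomplete to it
(`Solid.no_centre_anticentre`). So all those traces are stable, and `t a b` is a triangle with `t`
anticomplete to `Q`.

* Hammer: the traces of `a` and `b` would give a bipartition of `Q` unless the whole triangle is
  anticomplete to `Q`; then a shortest walk from such triangles to `Q` yields a hammer.
* House: neighbourhoods are connected, which yields two adjacent vertices with the same stable trace
  on `Q`, and these lie in a nontrivial homogeneous set.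
* Diamond: each vertex of a triangle has a unique private neighbour, the private neighbours of a
  triangle form a triangle, and every vertex other than `t` is adjacent to `t` or to its private
  neighbour `u`, whose neighbours other than `t` form a clique. The
  set `Q` then lies in a clique, which contains no core.
-/


open SimpleGraph

/-- `H` is isomorphic to an induced subgraph of `G`. -/
def ContainsInduced {α β : Type*} (G : SimpleGraph α) (H : SimpleGraph β) : Prop :=
  ∃ f : β ↪ α, ∀ a b, G.Adj (f a) (f b) ↔ H.Adj a b

/-- `G` is `H`-free: `G` does not contain `H` as an induced subgraph. -/
def IsFree {α β : Type*} (G : SimpleGraph α) (H : SimpleGraph β) : Prop :=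
  ¬ ContainsInduced G H

/-- The clique number of the subgraph of `G` induced on `s`. -/
noncomputable def cliqueNumOn {V : Type*} (G : SimpleGraph V) (s : Set V) : ℕ :=
  sSup {n | ∃ t : Finset V, ↑t ⊆ s ∧ G.IsNClique n t}

/-- The maximum `w`-weight of a clique of `G` contained in `s`. -/
noncomputable def wCliqueNumOn {V : Type*} (G : SimpleGraph V) (w : V → ℕ) (s : Set V) : ℕ :=
  sSup {n | ∃ t : Finset V, ↑t ⊆ s ∧ G.IsClique (↑t : Set V) ∧ ∑ v ∈ t, w v = n}

/-- A graph is perfect if every induced subgraph has chromatic number equal to clique number. -/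
def IsPerfect {V : Type*} (G : SimpleGraph V) : Prop :=
  ∀ s : Set V, (G.induce s).chromaticNumber = (cliqueNumOn G s : ℕ∞)

/-- `G` is perfectly divisible: every (nonempty) induced subgraph `H` of `G` admits a partition
`(A, B)` of its vertex set with `H[A]` perfect and `ω(H[B]) < ω(H)`. -/
def PerfectlyDivisible {V : Type*} (G : SimpleGraph V) : Prop :=
  ∀ s : Set V, s.Nonempty →
    ∃ A B : Set V, A ∪ B = s ∧ A ∩ B = ∅ ∧
      IsPerfect (G.induce A) ∧ cliqueNumOn G B < cliqueNumOn G s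

/-- `G` is perfectly weight divisible: for every positive integer weight function `w` and every
(nonempty) induced subgraph `H` of `G`, there is a partition `(P, W)` of its vertex set with
`H[P]` perfect and the maximum weight of a clique of `H[W]` less than that of `H`. -/
def PerfectlyWeightDivisible {V : Type*} (G : SimpleGraph V) : Prop :=
  ∀ w : V → ℕ, (∀ v, 0 < w v) →
    ∀ s : Set V, s.Nonempty →
      ∃ P W : Set V, P ∪ W = s ∧ P ∩ W = ∅ ∧
        IsPerfect (G.induce P) ∧ wCliqueNumOn G w W < wCliqueNumOn G w s

/-- The bull: a triangle `{0,1,2}` with pendant edges `0-3` and `1-4`. -/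
def bull : SimpleGraph (Fin 5) :=
  SimpleGraph.fromEdgeSet {s(0,1), s(0,2), s(1,2), s(0,3), s(1,4)}

/-- The house: the complement of the path on 5 vertices. -/
def house : SimpleGraph (Fin 5) := (SimpleGraph.pathGraph 5)ᶜ

/-- The hammer: a triangle `{0,1,2}` together with the path `2-3-4`. -/
def hammer : SimpleGraph (Fin 5) :=
  SimpleGraph.fromEdgeSet {s(0,1), s(0,2), s(1,2), s(2,3), s(3,4)}

/-- The diamond: `K₄` minus an edge. -/
def diamond : SimpleGraph (Fin 4) :=
  SimpleGraph.fromEdgeSet {s(0,1), s(0,2), s(0,3), s(1,2), s(1,3)}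

/-- The odd torch built on the cycle `C_k` from a set `S` of cycle vertices: two new adjacent
vertices are added, the first adjacent exactly to `S`, the second to no cycle vertex. -/
def oddTorch (k : ℕ) (S : Set (Fin k)) : SimpleGraph (Fin k ⊕ Fin 2) :=
  SimpleGraph.fromRel (fun a b =>
    match a, b with
    | Sum.inl i, Sum.inl j => (SimpleGraph.cycleGraph k).Adj i j
    | Sum.inl i, Sum.inr u => u = 0 ∧ i ∈ S
    | Sum.inr _, Sum.inl _ => False
    | Sum.inr u, Sum.inr v => u ≠ v)

/-- `G` contains no odd torch as an induced subgraph. -/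
def OddTorchFree {V : Type*} (G : SimpleGraph V) : Prop :=
  ∀ (k : ℕ) (S : Set (Fin k)), 5 ≤ k → Odd k → S.Nonempty →
    (∀ i ∈ S, ∀ j ∈ S, ¬ (SimpleGraph.cycleGraph k).Adj i j) →
    IsFree G (oddTorch k S)

/-- `G` is locally perfect: the neighbourhood of each vertex induces a perfect graph. -/
def LocallyPerfect {V : Type*} (G : SimpleGraph V) : Prop :=
  ∀ v : V, IsPerfect (G.induce (G.neighborSet v))

/-- `N(X)`: vertices outside `X` with a neighbour in `X`. -/
def nbhd {V : Type*} (G : SimpleGraph V) (X : Set V) : Set V :=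
  {u | u ∉ X ∧ ∃ x ∈ X, G.Adj u x}

/-- `M(X) = V(G) \ (X ∪ N(X))`: vertices outside `X` with no neighbour in `X`. -/
def antiNbhd {V : Type*} (G : SimpleGraph V) (X : Set V) : Set V :=
  {u | u ∉ X ∧ ∀ x ∈ X, ¬ G.Adj u x}

/-- Minimally non-perfectly divisible. -/
def MNPD {V : Type*} (G : SimpleGraph V) : Prop :=
  ¬ PerfectlyDivisible G ∧ ∀ s : Set V, s ≠ Set.univ → PerfectlyDivisible (G.induce s)

/-- Minimally non-perfectly weight divisible. -/
def MNWD {V : Type*} (G : SimpleGraph V) : Prop :=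
  ¬ PerfectlyWeightDivisible G ∧ ∀ s : Set V, s ≠ Set.univ → PerfectlyWeightDivisible (G.induce s)

/-! ### Weighted perfection -/

/-- Every clique of `G` inside `s` has `w`-weight at most `n`. -/
def WBound {V : Type} (G : SimpleGraph V) (w : V → ℕ) (s : Set V) (n : ℕ) : Prop :=
  ∀ K : Finset V, (K : Set V) ⊆ s → G.IsClique (K : Set V) → ∑ v ∈ K, w v ≤ n

/-- Weighted perfection of `G[s]`: for every weight function and every bound `n` on the weights of
cliques, the vertices `v` of `s` can be given sets of `w v` colours among `n` colours, adjacent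
vertices receiving disjoint sets. Weight `0` is allowed, which makes the notion hereditary. -/
def WPerf {V : Type} (G : SimpleGraph V) (s : Set V) : Prop :=
  ∀ (w : V → ℕ) (n : ℕ), WBound G w s n → ∃ c : V → Finset ℕ,
    (∀ v ∈ s, c v ⊆ Finset.range n ∧ (c v).card = w v) ∧
    ∀ u ∈ s, ∀ v ∈ s, G.Adj u v → Disjoint (c u) (c v)

section perfect
open Classical

theorem WPerf.mono {V : Type} {G : SimpleGraph V} {s t : Set V} (ht : WPerf G t) (h : s ⊆ t) :
    WPerf G s := by
  intro w n hw
  obtain ⟨c, hc, hd⟩ := ht (fun v => if v ∈ s then w v else 0) n (by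
    intro K hK hcl
    rw [← Finset.sum_filter]
    refine hw _ ?_ ?_
    · intro v hv
      simp only [Finset.coe_filter, Set.mem_ofPred_eq] at hv
      exact hv.2
    · exact hcl.subset (by intro v hv; simp only [Finset.coe_filter, Set.mem_ofPred_eq] at hv; exact hv.1))
  refine ⟨c, fun v hv => ?_, fun u hu v hv => hd u (h hu) v (h hv)⟩
  have := hc v (h hv)
  simpa [hv] using this

theorem pair_clique {V : Type} {G : SimpleGraph V} {u v : V} (h : G.Adj u v) :
    G.IsClique ((({u, v} : Finset V)) : Set V) := by
  intro a ha b hb hab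
  simp only [Finset.coe_insert, Finset.coe_singleton, Set.mem_insert_iff,
    Set.mem_singleton_iff] at ha hb
  rcases ha with rfl | rfl <;> rcases hb with rfl | rfl
  · exact absurd rfl hab
  · exact h
  · exact h.symm
  · exact absurd rfl hab

/-- A bipartite graph is coloured by giving initial segments of the colours to one side and final
segments to the other. -/
theorem WPerf.of_bipartite {V : Type} {G : SimpleGraph V} {s : Set V} (A : Set V)
    (hA : ∀ u ∈ s, ∀ v ∈ s, u ∈ A → v ∈ A → ¬ G.Adj u v)
    (hB : ∀ u ∈ s, ∀ v ∈ s, u ∉ A → v ∉ A → ¬ G.Adj u v) : WPerf G s := by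
  intro w n hw
  have h1 : ∀ v ∈ s, w v ≤ n := by
    intro v hv
    have := hw {v} (by simpa using hv) (by simp)
    simpa using this
  have h2 : ∀ u ∈ s, ∀ v ∈ s, G.Adj u v → w u + w v ≤ n := by
    intro u hu v hv h
    have := hw {u, v} (by intro x hx; simp at hx; rcases hx with rfl | rfl <;> assumption)
      (pair_clique h)
    rwa [Finset.sum_pair h.ne] at this
  refine ⟨fun v => if v ∈ A then Finset.range (w v) else Finset.Ico (n - w v) n, ?_, ?_⟩
  · intro v hv
    have := h1 v hv
    by_cases hvA : v ∈ A
    · simp [hvA, this]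
    · simp only [hvA, if_false, Nat.card_Ico]
      refine ⟨?_, by omega⟩
      intro x hx
      simp at hx ⊢
      exact hx.2
  · intro u hu v hv h
    have := h2 u hu v hv h
    rw [Finset.disjoint_left]
    by_cases huA : u ∈ A <;> by_cases hvA : v ∈ A
    · exact absurd h (hA u hu v hv huA hvA)
    · intro x; simp [huA, hvA]; omega
    · intro x; simp [huA, hvA]; omega
    · exact absurd h (hB u hu v hv huA hvA)

theorem insert_clique {V : Type} {G : SimpleGraph V} {v : V} {K : Finset V}
    (hK : G.IsClique (K : Set V)) (h : ∀ u ∈ K, G.Adj v u) :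
    G.IsClique ((insert v K : Finset V) : Set V) := by
  rw [Finset.coe_insert]
  exact hK.insert (fun b hb _ => h b hb)

/-- Adding a simplicial vertex preserves weighted perfection: the colours used on its
neighbourhood, a clique, leave enough free ones. -/
theorem WPerf.insert_simplicial {V : Type} [Fintype V] {G : SimpleGraph V} {s : Set V}
    (hs : WPerf G s) (v : V)
    (hv : ∀ a ∈ s, ∀ b ∈ s, G.Adj v a → G.Adj v b → a ≠ b → G.Adj a b) :
    WPerf G (insert v s) := by
  by_cases hvs : v ∈ s
  · rwa [Set.insert_eq_of_mem hvs]
  intro w n hw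
  obtain ⟨c, hc, hd⟩ := hs w n (fun K hK => hw K (hK.trans (Set.subset_insert _ _)))
  set K : Finset V := Finset.univ.filter (fun u => u ∈ s ∧ G.Adj v u) with hKdef
  have hKmem : ∀ u, u ∈ K ↔ u ∈ s ∧ G.Adj v u := by intro u; simp [hKdef]
  have hKs : (K : Set V) ⊆ s := fun u hu => ((hKmem u).1 hu).1
  have hcl : G.IsClique (K : Set V) := by
    intro a ha b hb hab
    have ha' := (hKmem a).1 ha
    have hb' := (hKmem b).1 hb
    exact hv a ha'.1 b hb'.1 ha'.2 hb'.2 hab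
  have hvK : v ∉ K := fun h => hvs ((hKmem v).1 h).1
  have hsum := hw (insert v K) (by
    rw [Finset.coe_insert]; exact Set.insert_subset_insert hKs)
    (insert_clique hcl (fun u hu => ((hKmem u).1 hu).2))
  rw [Finset.sum_insert hvK] at hsum
  have hcard : w v ≤ (Finset.range n \ K.biUnion c).card := by
    have h1 : (K.biUnion c).card ≤ ∑ u ∈ K, w u := by
      refine Finset.card_biUnion_le.trans (le_of_eq ?_)
      exact Finset.sum_congr rfl (fun u hu => (hc u (hKs hu)).2)
    have h2 := Finset.le_card_sdiff (K.biUnion c) (Finset.range n)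
    rw [Finset.card_range] at h2
    omega
  obtain ⟨D, hD, hDc⟩ := Finset.exists_subset_card_eq hcard
  have hDK : ∀ u ∈ s, G.Adj v u → Disjoint D (c u) := by
    intro u hu h
    have hu' : u ∈ K := (hKmem u).2 ⟨hu, h⟩
    rw [Finset.disjoint_left]
    intro x hx hxu
    have := Finset.mem_sdiff.1 (hD hx)
    exact this.2 (Finset.mem_biUnion.2 ⟨u, hu', hxu⟩)
  refine ⟨Function.update c v D, ?_, ?_⟩
  · intro u hu
    by_cases huv : u = v
    · subst huv
      rw [Function.update_self]
      exact ⟨hD.trans Finset.sdiff_subset, hDc⟩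
    · rw [Function.update_of_ne huv]
      exact hc u (hu.resolve_left huv)
  · intro a ha b hb hab
    by_cases hav : a = v
    · subst hav
      have hba : b ≠ a := hab.ne'
      rw [Function.update_self, Function.update_of_ne hba]
      exact hDK b (hb.resolve_left hba) hab
    · rw [Function.update_of_ne hav]
      by_cases hbv : b = v
      · subst hbv
        rw [Function.update_self]
        exact (hDK a (ha.resolve_left hav) hab.symm).symm
      · rw [Function.update_of_ne hbv]
        exact hd a (ha.resolve_left hav) b (hb.resolve_left hbv) hab

theorem exists_max_clique {V : Type} [Fintype V] (G : SimpleGraph V) (w : V → ℕ) (X : Set V) :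
    ∃ K : Finset V, (K : Set V) ⊆ X ∧ G.IsClique (K : Set V) ∧ WBound G w X (∑ v ∈ K, w v) := by
  obtain ⟨K, hK, hmax⟩ := Finset.exists_max_image
    (Finset.univ.filter (fun K : Finset V => (K : Set V) ⊆ X ∧ G.IsClique (K : Set V)))
    (fun K => ∑ v ∈ K, w v) ⟨∅, by simp⟩
  simp only [Finset.mem_filter, Finset.mem_univ, true_and] at hK hmax
  exact ⟨K, hK.1, hK.2, fun L hL hLc => hmax L ⟨hL, hLc⟩⟩

/-- `X` is homogeneous in `s`: each vertex of `s` outside `X` is complete or anticomplete to `X`. -/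
def Homog {V : Type} (G : SimpleGraph V) (s X : Set V) : Prop :=
  ∀ z ∈ s, z ∉ X → (∀ x ∈ X, G.Adj z x) ∨ (∀ x ∈ X, ¬ G.Adj z x)

/-- In a clique avoiding `X` except for `x₀`, the vertex `x₀` of the homogeneous set `X` may be
replaced by any clique of `X`. -/
theorem Homog.clique_union {V : Type} {G : SimpleGraph V} {s X : Set V} (hX : Homog G s X) {x₀ : V}
    (hx₀ : x₀ ∈ X) {K L : Finset V} (hK : G.IsClique (K : Set V)) (hKs : ∀ v ∈ K, v ∈ s ∧ v ∉ X)
    (hKx : ∀ v ∈ K, G.Adj v x₀) (hL : G.IsClique (L : Set V)) (hLX : (L : Set V) ⊆ X) :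
    G.IsClique ((K ∪ L : Finset V) : Set V) ∧ Disjoint K L := by
  have key : ∀ v ∈ K, ∀ x ∈ L, G.Adj v x := by
    intro v hv x hx
    rcases hX v (hKs v hv).1 (hKs v hv).2 with h | h
    · exact h x (hLX hx)
    · exact absurd (hKx v hv) (h x₀ hx₀)
  constructor
  · intro a ha b hb hab
    simp only [Finset.coe_union, Set.mem_union, Finset.mem_coe] at ha hb
    rcases ha with ha | ha <;> rcases hb with hb | hb
    · exact hK ha hb hab
    · exact key a ha b hb
    · exact (key b hb a ha).symm
    · exact hL ha hb hab
  · rw [Finset.disjoint_left]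
    intro v hv hvL
    exact (hKs v hv).2 (hLX hvL)

/-- Contracting a homogeneous set to a vertex `x₀` whose weight is that of its heaviest clique
`K₀` does not change the weights of cliques: each clique of the contraction lifts. -/
theorem Homog.lift_clique {V : Type} {G : SimpleGraph V} {s X : Set V} (hX : Homog G s X) (hXs : X ⊆ s)
    {x₀ : V} (hx₀ : x₀ ∈ X) (w : V → ℕ) {K₀ : Finset V} (hK₀ : (K₀ : Set V) ⊆ X)
    (hK₀c : G.IsClique (K₀ : Set V)) {K : Finset V} (hK : (K : Set V) ⊆ insert x₀ (s \ X))
    (hKc : G.IsClique (K : Set V)) :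
    ∃ L : Finset V, (L : Set V) ⊆ s ∧ G.IsClique (L : Set V) ∧
      ∑ v ∈ L, w v = ∑ v ∈ K, Function.update w x₀ (∑ v ∈ K₀, w v) v := by
  have hmem : ∀ v ∈ K, v ≠ x₀ → v ∈ s ∧ v ∉ X := by
    intro v hv hne
    rcases hK hv with h | h
    · exact absurd h hne
    · exact h
  by_cases hx : x₀ ∈ K
  · have hE : ∀ v ∈ K.erase x₀, v ∈ s ∧ v ∉ X := fun v hv =>
      hmem v (Finset.mem_of_mem_erase hv) (Finset.ne_of_mem_erase hv)
    have hEc : G.IsClique ((K.erase x₀ : Finset V) : Set V) :=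
      hKc.subset (by intro v hv; exact Finset.mem_of_mem_erase hv)
    obtain ⟨h1, h2⟩ := hX.clique_union hx₀ hEc hE (fun v hv =>
      hKc (Finset.mem_of_mem_erase hv) hx (Finset.ne_of_mem_erase hv)) hK₀c hK₀
    refine ⟨K.erase x₀ ∪ K₀, ?_, h1, ?_⟩
    · intro v hv
      simp only [Finset.coe_union, Set.mem_union, Finset.mem_coe] at hv
      rcases hv with hv | hv
      · exact (hE v hv).1
      · exact hXs (hK₀ hv)
    · rw [Finset.sum_union h2, ← Finset.sum_erase_add K _ hx, Function.update_self]
      congr 1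
      exact Finset.sum_congr rfl (fun v hv => by
        rw [Function.update_of_ne (Finset.ne_of_mem_erase hv)])
  · have hne : ∀ v ∈ K, v ≠ x₀ := fun v hv h => hx (h ▸ hv)
    refine ⟨K, fun v hv => (hmem v hv (hne v hv)).1, hKc, ?_⟩
    exact Finset.sum_congr rfl (fun v hv => by rw [Function.update_of_ne (hne v hv)])

/-- Substitution lemma: weighted perfection is preserved by replacing a vertex `x₀` by a weighted
perfect homogeneous set `X`; the colours of `x₀` are redistributed inside `X`. -/
theorem WPerf.subst {V : Type} [Fintype V] {G : SimpleGraph V} {s X : Set V} (hX : Homog G s X)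
    (hXs : X ⊆ s) {x₀ : V} (hx₀ : x₀ ∈ X) (h1 : WPerf G (insert x₀ (s \ X))) (h2 : WPerf G X) :
    WPerf G s := by
  intro w n hw
  obtain ⟨K₀, hK₀, hK₀c, hK₀m⟩ := exists_max_clique G w X
  set m := ∑ v ∈ K₀, w v with hm
  obtain ⟨c₁, hc₁, hd₁⟩ := h1 (Function.update w x₀ m) n (by
    intro K hK hKc
    obtain ⟨L, hL, hLc, hsum⟩ := hX.lift_clique hXs hx₀ w hK₀ hK₀c hK hKc
    rw [← hsum]
    exact hw L hL hLc)
  obtain ⟨c₂, hc₂, hd₂⟩ := h2 w m hK₀m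
  have hx := hc₁ x₀ (Set.mem_insert _ _)
  rw [Function.update_self] at hx
  obtain ⟨e, he⟩ : ∃ e : ℕ → ℕ, Set.InjOn e (Finset.range m) ∧
      ∀ i ∈ Finset.range m, e i ∈ c₁ x₀ := by
    have : (Finset.range m).card = (c₁ x₀).card := by rw [Finset.card_range, hx.2]
    let f := Finset.equivOfCardEq this
    refine ⟨fun i => if h : i ∈ Finset.range m then (f ⟨i, h⟩ : ℕ) else 0, ?_, ?_⟩
    · intro i hi j hj hij
      have hi' : i ∈ Finset.range m := hi
      have hj' : j ∈ Finset.range m := hj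
      simp only [hi', hj', dif_pos] at hij
      have := f.injective (Subtype.ext hij)
      simpa using this
    · intro i hi
      simp only [hi, dif_pos]
      exact (f ⟨i, hi⟩).2
  have hin : ∀ v ∈ s, v ∉ X → v ∈ insert x₀ (s \ X) := fun v hv hvX => Or.inr ⟨hv, hvX⟩
  have hsub : ∀ v ∈ X, (c₂ v).image e ⊆ c₁ x₀ := by
    intro v hv i hi
    obtain ⟨j, hj, rfl⟩ := Finset.mem_image.1 hi
    exact he.2 j ((hc₂ v hv).1 hj)
  have hcross : ∀ u ∈ s, u ∉ X → ∀ v ∈ X, G.Adj u v → Disjoint (c₁ u) ((c₂ v).image e) := by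
    intro u hu huX v hv huv
    have hux : G.Adj u x₀ := by
      rcases hX u hu huX with h | h
      · exact h x₀ hx₀
      · exact absurd huv (h v hv)
    exact Finset.disjoint_of_subset_right (hsub v hv)
      (hd₁ u (hin u hu huX) x₀ (Set.mem_insert _ _) hux)
  refine ⟨fun v => if v ∈ X then (c₂ v).image e else c₁ v, ?_, ?_⟩
  · intro v hv
    by_cases hvX : v ∈ X
    · simp only [hvX, if_true]
      refine ⟨(hsub v hvX).trans hx.1, ?_⟩
      rw [Finset.card_image_of_injOn (he.1.mono ?_), (hc₂ v hvX).2]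
      exact_mod_cast (hc₂ v hvX).1
    · simp only [hvX, if_false]
      have := hc₁ v (hin v hv hvX)
      rwa [Function.update_of_ne (by rintro rfl; exact hvX hx₀)] at this
  · intro u hu v hv huv
    by_cases huX : u ∈ X <;> by_cases hvX : v ∈ X
    · simp only [huX, hvX, if_true]
      rw [Finset.disjoint_left]
      intro i hi hi'
      obtain ⟨a, ha, rfl⟩ := Finset.mem_image.1 hi
      obtain ⟨b, hb, hab⟩ := Finset.mem_image.1 hi'
      have := he.1 ((hc₂ v hvX).1 hb) ((hc₂ u huX).1 ha) hab
      subst this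
      exact Finset.disjoint_left.1 (hd₂ u huX v hvX huv) ha hb
    · simp only [huX, hvX, if_true, if_false]
      exact (hcross v hv hvX u huX huv.symm).symm
    · simp only [huX, hvX, if_true, if_false]
      exact hcross u hu huX v hvX huv
    · simp only [huX, hvX, if_false]
      exact hd₁ u (hin u hu huX) v (hin v hv hvX) huv

/-! ### Cores: prime graphs without simplicial vertices -/

/-- `G[Q]` has only trivial homogeneous sets. -/
def PrimeOn {V : Type} (G : SimpleGraph V) (Q : Set V) : Prop :=
  ∀ X ⊆ Q, Homog G Q X → X.Subsingleton ∨ X = Q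

/-- `G[Q]` is nonempty, prime and has no simplicial vertex. -/
structure Core {V : Type} (G : SimpleGraph V) (Q : Set V) : Prop where
  ne : Q.Nonempty
  prime : PrimeOn G Q
  no_simplicial : ∀ v ∈ Q, ∃ a ∈ Q, ∃ b ∈ Q, G.Adj v a ∧ G.Adj v b ∧ a ≠ b ∧ ¬ G.Adj a b

/-- A vertex-minimal set that is not weighted perfect is a core, and is not bipartite. -/
theorem exists_core {V : Type} [Fintype V] {G : SimpleGraph V} {s : Set V} (hs : ¬ WPerf G s) :
    ∃ Q ⊆ s, Core G Q ∧ ∀ A : Set V, (∀ u ∈ Q, ∀ v ∈ Q, u ∈ A → v ∈ A → ¬ G.Adj u v) →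
      ¬ (∀ u ∈ Q, ∀ v ∈ Q, u ∉ A → v ∉ A → ¬ G.Adj u v) := by
  obtain ⟨Q, hQ, hmin⟩ := Set.Finite.exists_minimal (s := {Q : Set V | Q ⊆ s ∧ ¬ WPerf G Q})
    (Set.toFinite _) ⟨s, subset_rfl, hs⟩
  have hlt : ∀ R : Set V, R ⊆ Q → R ≠ Q → WPerf G R := by
    intro R hR hne
    by_contra h
    exact hne (subset_antisymm hR (hmin ⟨hR.trans hQ.1, h⟩ hR))
  refine ⟨Q, hQ.1, ⟨?_, ?_, ?_⟩, fun A hA hB => hQ.2 (WPerf.of_bipartite A hA hB)⟩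
  · rw [Set.nonempty_iff_ne_empty]
    rintro rfl
    exact hQ.2 (WPerf.of_bipartite ∅ (by simp) (by simp))
  · intro X hXQ hX
    by_contra! h
    obtain ⟨x, hx, y, hy, hxy⟩ := h.1
    refine hQ.2 (WPerf.subst hX hXQ hx (hlt _ ?_ ?_) (hlt X hXQ h.2))
    · exact Set.insert_subset (hXQ hx) Set.sdiff_subset
    · intro he
      have : y ∈ insert x (Q \ X) := by rw [he]; exact hXQ hy
      rcases this with h | h
      · exact hxy h.symm
      · exact h.2 hy
  · intro v hv
    by_contra! h
    have h1 : WPerf G (Q \ {v}) := hlt _ Set.sdiff_subset (fun he => by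
      have : v ∈ Q \ {v} := by rw [he]; exact hv
      exact this.2 rfl)
    have := h1.insert_simplicial v (fun a ha b hb hva hvb hab => h a ha.1 b hb.1 hva hvb hab)
    rw [Set.insert_sdiff_singleton, Set.insert_eq_of_mem hv] at this
    exact hQ.2 this

theorem Core.conn {V : Type} {G : SimpleGraph V} {Q : Set V} (h : Core G Q) {C : Set V}
    (hC : C ⊆ Q) (hne : C.Nonempty) (hcl : ∀ u ∈ C, ∀ v ∈ Q, G.Adj u v → v ∈ C) : C = Q := by
  rcases h.prime C hC (fun z hz hzC => Or.inr fun x hx hzx => hzC (hcl x hx z hz hzx.symm)) with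
    h1 | h1
  · obtain ⟨c, hc⟩ := hne
    obtain ⟨a, ha, -, -, hca, -⟩ := h.no_simplicial c (hC hc)
    exact absurd (h1 hc (hcl c hc a ha hca)) hca.ne
  · exact h1

theorem Core.coconn {V : Type} {G : SimpleGraph V} {Q : Set V} (h : Core G Q) {C : Set V}
    (hC : C ⊆ Q) (hne : C.Nonempty) (hcl : ∀ u ∈ C, ∀ v ∈ Q, v ∉ C → G.Adj u v) : C = Q := by
  rcases h.prime C hC (fun z hz hzC => Or.inl fun x hx => (hcl x hx z hz hzC).symm) with
    h1 | h1
  · rcases h.prime (Q \ C) Set.sdiff_subset (fun z hz hzC => Or.inl fun x hx =>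
      hcl z (by by_contra hh; exact hzC ⟨hz, hh⟩) x hx.1 hx.2) with h2 | h2
    · obtain ⟨c, hc⟩ := hne
      obtain ⟨a, ha, b, hb, hca, hcb, hab, -⟩ := h.no_simplicial c (hC hc)
      exact absurd (h2 ⟨ha, fun hh => hca.ne (h1 hc hh)⟩ ⟨hb, fun hh => hcb.ne (h1 hc hh)⟩) hab
    · obtain ⟨c, hc⟩ := hne
      have hcQ : c ∈ Q \ C := by rw [h2]; exact hC hc
      exact absurd hc hcQ.2
  · exact h1

theorem Core.nonsplit {V : Type} {G : SimpleGraph V} {Q : Set V} (h : Core G Q) (S : Set V)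
    (hS : ∀ u ∈ Q, ∀ v ∈ Q, u ∈ S → v ∈ S → ¬ G.Adj u v)
    (hK : ∀ u ∈ Q, ∀ v ∈ Q, u ∉ S → v ∉ S → u ≠ v → G.Adj u v) : False := by
  by_cases hne : ∃ s ∈ Q, s ∈ S
  · obtain ⟨s, hs, hsS⟩ := hne
    obtain ⟨a, ha, b, hb, hsa, hsb, hab, hn⟩ := h.no_simplicial s hs
    exact hn (hK a ha b hb (fun hh => hS s hs a ha hsS hh hsa)
      (fun hh => hS s hs b hb hsS hh hsb) hab)
  · push Not at hne
    obtain ⟨s, hs⟩ := h.ne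
    obtain ⟨a, ha, b, hb, hsa, hsb, hab, hn⟩ := h.no_simplicial s hs
    exact hn (hK a ha b hb (hne a ha) (hne b hb) hab)

end perfect

/-! ### Traces on a core in a bull-free graph -/

/-- `G` has no induced bull, in terms of its five vertices: the triangle `abc` with the pendant
edges `ad` and `be`. The remaining distinctness conditions follow. -/
def NoBull {V : Type} (G : SimpleGraph V) : Prop :=
  ∀ a b c d e, G.Adj a b → G.Adj a c → G.Adj b c → G.Adj a d → G.Adj b e → ¬ G.Adj a e →
    ¬ G.Adj b d → ¬ G.Adj c d → ¬ G.Adj c e → ¬ G.Adj d e → False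

/-- The vertices complete to `Q`. -/
def Complete {V : Type} (G : SimpleGraph V) (Q : Set V) (a : V) : Prop := ∀ q ∈ Q, G.Adj a q

/-- The vertices outside `Q` that are anticomplete to `Q`. -/
def Anti {V : Type} (G : SimpleGraph V) (Q : Set V) (b : V) : Prop := ∀ q ∈ Q, b ≠ q ∧ ¬ G.Adj b q

/-- If no vertex outside `Y` distinguishes two adjacent vertices of `Y`, then the components of
`G[Y]` are homogeneous; hence in a prime graph `Y` is edgeless or everything. -/
theorem PrimeOn.eq_of_edge {V : Type} {G : SimpleGraph V} {Q Y : Set V} (hQ : PrimeOn G Q)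
    (hY : Y ⊆ Q) {u₀ u₁ : V} (h₀ : u₀ ∈ Y) (h₁ : u₁ ∈ Y) (h₀₁ : G.Adj u₀ u₁)
    (h : ∀ r ∈ Q, r ∉ Y → ∀ u ∈ Y, ∀ v ∈ Y, G.Adj u v → G.Adj r u → G.Adj r v) : Y = Q := by
  set Z : Set V := {v | Relation.ReflTransGen (fun a b => b ∈ Y ∧ G.Adj a b) u₀ v} with hZ
  have hZY : Z ⊆ Y := by
    intro v hv
    rcases Relation.ReflTransGen.cases_tail hv with rfl | ⟨_, _, h2⟩
    · exact h₀
    · exact h2.1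
  have hcl : ∀ u ∈ Z, ∀ v ∈ Y, G.Adj u v → v ∈ Z := fun u hu v hv huv =>
    Relation.ReflTransGen.tail hu ⟨hv, huv⟩
  have hconst : ∀ r ∈ Q, r ∉ Y → ∀ v ∈ Z, (G.Adj r u₀ ↔ G.Adj r v) := by
    intro r hr hrY v hv
    change Relation.ReflTransGen _ u₀ v at hv
    induction hv with
    | refl => rfl
    | tail hb hbc ih =>
      exact ih.trans ⟨h r hr hrY _ (hZY hb) _ hbc.1 hbc.2, h r hr hrY _ hbc.1 _ (hZY hb) hbc.2.symm⟩
  have hu₀ : u₀ ∈ Z := Relation.ReflTransGen.refl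
  rcases hQ Z (hZY.trans hY) (by
    intro z hz hzZ
    by_cases hzY : z ∈ Y
    · exact Or.inr fun x hx hzx => hzZ (hcl x hx z hzY hzx.symm)
    · by_cases h0 : G.Adj z u₀
      · exact Or.inl fun x hx => (hconst z hz hzY x hx).1 h0
      · exact Or.inr fun x hx hzx => h0 ((hconst z hz hzY x hx).2 hzx)) with h1 | h1
  · exact absurd (h1 hu₀ (hcl u₀ hu₀ u₁ h₁ h₀₁)) h₀₁.ne
  · exact subset_antisymm hY (h1 ▸ hZY)

/-- The properties of a core, in a form invariant under complementation. -/
structure Solid {V : Type} (G : SimpleGraph V) (Q : Set V) : Prop where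
  nontrivial : Q.Nontrivial
  prime : PrimeOn G Q
  conn : ∀ C ⊆ Q, C.Nonempty → (∀ u ∈ C, ∀ v ∈ Q, G.Adj u v → v ∈ C) → C = Q
  coconn : ∀ C ⊆ Q, C.Nonempty → (∀ u ∈ C, ∀ v ∈ Q, v ∉ C → G.Adj u v) → C = Q
  nonsplit : ∀ S : Set V, (∀ u ∈ Q, ∀ v ∈ Q, u ∈ S → v ∈ S → ¬ G.Adj u v) →
    (∀ u ∈ Q, ∀ v ∈ Q, u ∉ S → v ∉ S → u ≠ v → G.Adj u v) → False

theorem Core.solid {V : Type} {G : SimpleGraph V} {Q : Set V} (h : Core G Q) : Solid G Q where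
  nontrivial := by
    obtain ⟨s, hs⟩ := h.ne
    obtain ⟨a, ha, -, -, hsa, -⟩ := h.no_simplicial s hs
    exact ⟨s, hs, a, ha, hsa.ne⟩
  prime := h.prime
  conn := fun _ => h.conn
  coconn := fun _ => h.coconn
  nonsplit := h.nonsplit

theorem PrimeOn.compl {V : Type} {G : SimpleGraph V} {Q : Set V} (h : PrimeOn G Q) :
    PrimeOn Gᶜ Q := by
  intro X hX hH
  refine h X hX fun z hz hzX => ?_
  rcases hH z hz hzX with h1 | h1
  · exact Or.inr fun x hx => ((compl_adj _ _ _).1 (h1 x hx)).2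
  · refine Or.inl fun x hx => ?_
    have := h1 x hx
    rw [compl_adj] at this
    have hne : z ≠ x := fun hh => hzX (hh ▸ hx)
    tauto

theorem Solid.compl {V : Type} {G : SimpleGraph V} {Q : Set V} (h : Solid G Q) :
    Solid Gᶜ Q where
  nontrivial := h.nontrivial
  prime := h.prime.compl
  conn := by
    intro C hC hne hcl
    refine h.coconn C hC hne fun u hu v hv hvC => ?_
    by_contra hn
    exact hvC (hcl u hu v hv ((compl_adj _ _ _).2 ⟨fun hh => hvC (hh ▸ hu), hn⟩))
  coconn := by
    intro C hC hne hcl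
    refine h.conn C hC hne fun u hu v hv huv => ?_
    by_contra hn
    exact ((compl_adj _ _ _).1 (hcl u hu v hv hn)).2 huv
  nonsplit := by
    intro S hS hK
    refine h.nonsplit Sᶜ ?_ ?_
    · intro u hu v hv huS hvS huv
      exact ((compl_adj _ _ _).1 (hK u hu v hv huS hvS huv.ne)).2 huv
    · intro u hu v hv huS hvS huv
      have := hS u hu v hv (not_not.1 huS) (not_not.1 hvS)
      rw [compl_adj] at this
      tauto

theorem NoBull.compl {V : Type} {G : SimpleGraph V} (h : NoBull G) : NoBull Gᶜ := by
  -- the complement of the bull `abc, ad, be` is the bull `dec, db, ea`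
  intro a b c d e hab hac hbc had hbe hae hbd hcd hce hde
  have key : ∀ u v, u ≠ v → ¬ Gᶜ.Adj u v → G.Adj u v := by
    intro u v huv hn
    by_contra h
    exact hn ((compl_adj _ _ _).2 ⟨huv, h⟩)
  have nadj : ∀ u v, Gᶜ.Adj u v → ¬ G.Adj v u := fun u v h hh => ((compl_adj _ _ _).1 h).2 hh.symm
  exact h d e c b a
    (key d e (by rintro rfl; exact hae had) hde)
    (key c d (by rintro rfl; exact hbd hbc) hcd).symm
    (key c e (by rintro rfl; exact hae hac) hce).symm
    (key b d (by rintro rfl; exact hcd hbc.symm) hbd).symm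
    (key a e (by rintro rfl; exact hce hac.symm) hae).symm
    (nadj a d had) (nadj b e hbe) (nadj b c hbc) (nadj a c hac) (nadj a b hab)

/-- A vertex with a neighbour anticomplete to the prime set `Q` is complete to `Q`, or its
neighbourhood in `Q` is stable. -/
theorem trace_stable_or_complete {V : Type} {G : SimpleGraph V} {Q : Set V} (hb : NoBull G)
    (hQ : PrimeOn G Q) {x y : V} (hxy : G.Adj x y) (hy : Anti G Q y) :
    Complete G Q x ∨ ∀ q ∈ Q, ∀ q' ∈ Q, G.Adj x q → G.Adj x q' → ¬ G.Adj q q' := by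
  by_contra! h
  obtain ⟨h1, q, hq, q', hq', hxq, hxq', hqq'⟩ := h
  have hY := hQ.eq_of_edge (Y := {q | q ∈ Q ∧ G.Adj x q}) (fun _ hz => hz.1) ⟨hq, hxq⟩ ⟨hq', hxq'⟩
    hqq' (by
      intro r hr hrY u hu v hv huv hru
      by_contra hrv
      have hxr : ¬ G.Adj x r := fun hh => hrY ⟨hr, hh⟩
      exact hb x u v y r hu.2 hv.2 huv hxy hru.symm hxr (fun hh => (hy u hu.1).2 hh.symm)
        (fun hh => (hy v hv.1).2 hh.symm) (fun hh => hrv hh.symm) (hy r hr).2)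
  exact h1 fun p hp => by
    have : p ∈ {q | q ∈ Q ∧ G.Adj x q} := by rw [hY]; exact hp
    exact this.2

/-! ### No core has both a centre and an anticentre -/

theorem Solid.anti_not_mem {V : Type} {G : SimpleGraph V} {Q : Set V} {b : V}
    (h : Anti G Q b) : b ∉ Q := fun hb => (h b hb).1 rfl

theorem Solid.complete_compl_iff {V : Type} {G : SimpleGraph V} {Q : Set V} {b : V} :
    Complete Gᶜ Q b ↔ Anti G Q b := by
  simp only [Complete, Anti, compl_adj]

theorem Solid.anti_compl_iff {V : Type} {G : SimpleGraph V} {Q : Set V} {b : V} :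
    Anti Gᶜ Q b ↔ Complete G Q b := by
  simp only [Complete, Anti, compl_adj]
  refine forall₂_congr fun q _ => ?_
  constructor
  · rintro ⟨h1, h2⟩; tauto
  · intro h; exact ⟨h.ne, fun hh => hh.2 h⟩

/-- A mixed vertex, neither complete nor anticomplete to `Q`, that is adjacent to an anticentre (a
vertex anticomplete to `Q`) is adjacent to all centres (vertices complete to `Q`). -/
theorem Solid.mixed_dichotomy {V : Type} {G : SimpleGraph V} {Q : Set V} (hb : NoBull G)
    (hQ : Solid G Q) {z a b : V} (hzA : ¬ Complete G Q z) (hzB : ¬ Anti G Q z)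
    (ha : Complete G Q a) (hbB : Anti G Q b) (hzb : G.Adj z b) : G.Adj z a := by
  by_contra hza
  have hzne : z ≠ a := by rintro rfl; exact hzA ha
  have h1 := (trace_stable_or_complete hb hQ.prime hzb hbB).resolve_left hzA
  have h2 := (trace_stable_or_complete hb.compl hQ.compl.prime (x := z) (y := a)
    ((compl_adj _ _ _).2 ⟨hzne, hza⟩) (anti_compl_iff.2 ha)).resolve_left
    (fun h => hzB (complete_compl_iff.1 h))
  have hzQ : z ∉ Q := by
    intro hz
    exact (hbB z hz).2 hzb.symm
  refine hQ.nonsplit {q | G.Adj z q} (fun u hu v hv huS hvS => h1 u hu v hv huS hvS) ?_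
  intro u hu v hv huS hvS huv
  have := h2 u hu v hv ((compl_adj _ _ _).2 ⟨fun hh => hzQ (hh ▸ hu), huS⟩)
    ((compl_adj _ _ _).2 ⟨fun hh => hzQ (hh ▸ hv), hvS⟩)
  rw [compl_adj] at this
  tauto

/-- An anticentre with a mixed neighbour is adjacent to all centres. -/
theorem Solid.anticentre_adj {V : Type} {G : SimpleGraph V} {Q : Set V} (hb : NoBull G)
    (hQ : Solid G Q) {z a b : V} (hzA : ¬ Complete G Q z) (hzB : ¬ Anti G Q z)
    (ha : Complete G Q a) (hbB : Anti G Q b) (hzb : G.Adj z b) : G.Adj b a := by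
  by_contra hba
  have hza := hQ.mixed_dichotomy hb hzA hzB ha hbB hzb
  have hzQ : z ∉ Q := fun hz => (hbB z hz).2 hzb.symm
  obtain ⟨q₀, hq₀, hzq₀⟩ : ∃ q ∈ Q, G.Adj z q := by
    by_contra! h
    exact hzB fun q hq => ⟨fun hh => hzQ (hh ▸ hq), h q hq⟩
  obtain ⟨q, hq, hzq, q', hq', hzq', hqq', hne⟩ : ∃ q ∈ Q, G.Adj z q ∧ ∃ q' ∈ Q, ¬ G.Adj z q' ∧
      ¬ G.Adj q q' ∧ q ≠ q' := by
    by_contra! h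
    have := hQ.coconn {q | q ∈ Q ∧ G.Adj z q} (fun _ h => h.1) ⟨q₀, hq₀, hzq₀⟩ (by
      intro u hu v hv hvC
      by_contra huv
      have hzv : ¬ G.Adj z v := fun hh => hvC ⟨hv, hh⟩
      have := h u hu.1 hu.2 v hv hzv huv
      subst this
      exact hzv hu.2)
    exact hzA fun p hp => by
      have : p ∈ {q | q ∈ Q ∧ G.Adj z q} := by rw [this]; exact hp
      exact this.2
  exact hb a z q q' b hza.symm (ha q hq) hzq (ha q' hq') hzb (fun hh => hba hh.symm) hzq' hqq'
    (fun hh => (hbB q hq).2 hh.symm) (fun hh => (hbB q' hq').2 hh.symm)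

/-- If every centre is adjacent to every mixed vertex, then the vertices reachable from `Q` and the
mixed vertices through anticentres form a homogeneous set. -/
theorem Solid.centre_half {V : Type} {G : SimpleGraph V} {Q : Set V} (hb : NoBull G)
    (hG : PrimeOn G Set.univ) (hQ : Solid G Q) {a₀ : V} (ha₀ : Complete G Q a₀)
    (hR : ∀ z a, ¬ Complete G Q z → ¬ Anti G Q z → z ∉ Q → Complete G Q a → G.Adj z a) :
    False := by
  obtain ⟨p, hp, p', hp', hpp'⟩ := hQ.nontrivial
  have hAB : ∀ v, Complete G Q v → ¬ Anti G Q v := fun v h1 h2 => (h2 p hp).2 (h1 p hp)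
  have hAQ : ∀ v ∈ Q, ¬ Complete G Q v := fun v hv h => (h v hv).ne rfl
  have hBQ : ∀ v ∈ Q, ¬ Anti G Q v := fun v hv h => (h v hv).1 rfl
  set Y : Set V := {v | ∃ r, ¬ Complete G Q r ∧ ¬ Anti G Q r ∧
    Relation.ReflTransGen (fun u v => Anti G Q v ∧ G.Adj u v) r v} with hYdef
  have hYA : ∀ v ∈ Y, ¬ Complete G Q v := by
    rintro v ⟨r, hr1, hr2, hrv⟩
    rcases Relation.ReflTransGen.cases_tail hrv with rfl | ⟨_, _, h2⟩
    · exact hr1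
    · exact fun h => hAB v h h2.1
  have hmain : ∀ u ∈ Y, ∀ a, Complete G Q a → G.Adj a u ∧ ∀ v, Anti G Q v → G.Adj u v → G.Adj a v := by
    rintro u ⟨r, hr1, hr2, hru⟩ a ha
    induction hru with
    | refl =>
      by_cases hrQ : r ∈ Q
      · exact ⟨ha r hrQ, fun v hv h => absurd h.symm (hv r hrQ).2⟩
      · exact ⟨(hR r a hr1 hr2 hrQ ha).symm, fun v hv h =>
          (hQ.anticentre_adj hb hr1 hr2 ha hv h).symm⟩
    | @tail t u hrt htu ih =>
      have hau := ih.2 u htu.1 htu.2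
      refine ⟨hau, fun v hv huv => ?_⟩
      by_contra hav
      have htv : ¬ G.Adj t v := fun hh => hav (ih.2 v hv hh)
      obtain ⟨q, hq, htq⟩ : ∃ q ∈ Q, ¬ G.Adj t q := by
        by_contra! h
        exact hYA t ⟨r, hr1, hr2, hrt⟩ h
      exact hb a u t q v hau ih.1 htu.2.symm (ha q hq) huv hav (htu.1 q hq).2 htq htv
        (fun hh => (hv q hq).2 hh.symm)
  have hQY : Q ⊆ Y := fun q hq => ⟨q, hAQ q hq, hBQ q hq, Relation.ReflTransGen.refl⟩
  rcases hG Y (Set.subset_univ _) (by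
    intro z _ hz
    by_cases hzA : Complete G Q z
    · exact Or.inl fun x hx => (hmain x hx z hzA).1
    · refine Or.inr fun x hx hzx => hz ?_
      by_cases hzB : Anti G Q z
      · obtain ⟨r, hr1, hr2, hr⟩ := hx
        exact ⟨r, hr1, hr2, hr.tail ⟨hzB, hzx.symm⟩⟩
      · exact ⟨z, hzA, hzB, Relation.ReflTransGen.refl⟩) with h1 | h1
  · exact hpp' (h1 (hQY hp) (hQY hp'))
  · exact hYA a₀ (h1 ▸ Set.mem_univ _) ha₀

/-- In a prime bull-free graph no solid set has both a centre and an anticentre. -/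
theorem Solid.no_centre_anticentre {V : Type} {G : SimpleGraph V} {Q : Set V} (hb : NoBull G)
    (hG : PrimeOn G Set.univ) (hQ : Solid G Q) {a₀ b₀ : V} (ha₀ : Complete G Q a₀)
    (hb₀ : Anti G Q b₀) : False := by
  refine hQ.centre_half hb hG ha₀ fun z a hz1 hz2 hzQ ha => ?_
  by_contra hza
  refine hQ.compl.centre_half hb.compl hG.compl (complete_compl_iff.2 hb₀)
    fun z' b hz1' hz2' hzQ' hbb => ?_
  rw [complete_compl_iff] at hz1' hbb
  rw [anti_compl_iff] at hz2'
  rw [compl_adj]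
  refine ⟨by rintro rfl; exact hz1' hbb, fun hzb => ?_⟩
  have e1 := hQ.anticentre_adj hb hz2' hz1' ha hbb hzb
  have e2 := hQ.compl.anticentre_adj hb.compl (z := z) (a := b) (b := a)
    (by rwa [complete_compl_iff]) (by rwa [anti_compl_iff]) (complete_compl_iff.2 hbb)
    (anti_compl_iff.2 ha) ((compl_adj _ _ _).2 ⟨by rintro rfl; exact hz1 ha, hza⟩)
  exact ((compl_adj _ _ _).1 e2).2 e1.symm

/-- The trace on `Q` of a vertex with a neighbour anticomplete to `Q` is stable. -/
theorem Solid.trace_stable {V : Type} {G : SimpleGraph V} {Q : Set V} (hb : NoBull G)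
    (hG : PrimeOn G Set.univ) (hQ : Solid G Q) {x y : V} (hxy : G.Adj x y) (hy : Anti G Q y) :
    ∀ q ∈ Q, ∀ q' ∈ Q, G.Adj x q → G.Adj x q' → ¬ G.Adj q q' :=
  (trace_stable_or_complete hb hQ.prime hxy hy).resolve_left
    fun h => hQ.no_centre_anticentre hb hG h hy

/-! ### Hammer-free graphs -/

/-- `G` has no induced hammer: the triangle `abc` with the path `c, d, e`. -/
def NoHammer {V : Type} (G : SimpleGraph V) : Prop :=
  ∀ a b c d e, G.Adj a b → G.Adj a c → G.Adj b c → G.Adj c d → G.Adj d e → ¬ G.Adj a d →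
    ¬ G.Adj b d → ¬ G.Adj a e → ¬ G.Adj b e → ¬ G.Adj c e → False

/-- Connectedness, as the absence of nontrivial sets closed under adjacency. -/
def Conn {V : Type} (G : SimpleGraph V) : Prop :=
  ∀ C : Set V, C.Nonempty → (∀ u ∈ C, ∀ v, G.Adj u v → v ∈ C) → ∀ v, v ∈ C

/-- `G[Q]` is not bipartite. -/
def NonBip {V : Type} (G : SimpleGraph V) (Q : Set V) : Prop :=
  ∀ A : Set V, (∀ u ∈ Q, ∀ v ∈ Q, u ∈ A → v ∈ A → ¬ G.Adj u v) →
      ¬ (∀ u ∈ Q, ∀ v ∈ Q, u ∉ A → v ∉ A → ¬ G.Adj u v)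

/-- The traces on `Q` of vertices with a neighbour anticomplete to `Q` are stable. -/
def StableTraces {V : Type} (G : SimpleGraph V) (Q : Set V) : Prop :=
  ∀ x y, G.Adj x y → Anti G Q y → ∀ q ∈ Q, ∀ q' ∈ Q, G.Adj x q → G.Adj x q' → ¬ G.Adj q q'

/-- A triangle with one vertex anticomplete to `Q` is anticomplete to `Q`: otherwise the traces of
the other two vertices would yield a bipartition of `Q`. -/
theorem hammer_triangle {V : Type} {G : SimpleGraph V} {Q : Set V} (hh : NoHammer G)
    (hQ : Solid G Q) (hnb : NonBip G Q) (hst : StableTraces G Q) {t a b : V} (ht : Anti G Q t)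
    (hta : G.Adj t a) (htb : G.Adj t b) (hab : G.Adj a b) : Anti G Q a := by
  have sa := hst a t hta.symm ht
  have sb := hst b t htb.symm ht
  have heq : ∀ q ∈ Q, (G.Adj a q ↔ G.Adj b q) := by
    by_contra! h
    obtain ⟨q₀, hq₀, hne⟩ := h
    have hD := hQ.conn {q | q ∈ Q ∧ ¬ (G.Adj a q ↔ G.Adj b q)} (fun _ h => h.1)
      ⟨q₀, hq₀, by tauto⟩ (by
        rintro u ⟨hu, huD⟩ v hv huv
        refine ⟨hv, fun hiff => ?_⟩
        by_cases hau : G.Adj a u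
        · have hbu : ¬ G.Adj b u := by tauto
          have hav : ¬ G.Adj a v := fun h => sa u hu v hv hau h huv
          exact hh t b a u v htb hta hab.symm hau huv (ht u hu).2 hbu (ht v hv).2 (by tauto) hav
        · have hbu : G.Adj b u := by tauto
          have hbv : ¬ G.Adj b v := fun h => sb u hu v hv hbu h huv
          exact hh t a b u v hta htb hab hbu huv (ht u hu).2 hau (ht v hv).2 (by tauto) hbv)
    have hD' : ∀ q ∈ Q, ¬ (G.Adj a q ↔ G.Adj b q) := fun q hq => by
      have : q ∈ {q | q ∈ Q ∧ ¬ (G.Adj a q ↔ G.Adj b q)} := by rw [hD]; exact hq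
      exact this.2
    refine hnb {q | G.Adj a q} (fun u hu v hv h1 h2 => sa u hu v hv h1 h2) ?_
    intro u hu v hv h1 h2
    have e1 := hD' u hu
    have e2 := hD' v hv
    simp only [Set.mem_ofPred_eq] at h1 h2
    exact sb u hu v hv (by tauto) (by tauto)
  have hstep : ∀ q ∈ Q, ∀ u ∈ Q, ∀ v ∈ Q, G.Adj a q → G.Adj q u → G.Adj u v → v ≠ q →
      G.Adj a v := by
    intro q hq u hu v hv haq hqu huv hvq
    by_contra hav
    have hau : ¬ G.Adj a u := fun h => sa q hq u hu haq h hqu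
    by_cases hqv : G.Adj q v
    · exact hh u v q a t huv hqu.symm hqv.symm haq.symm hta.symm (fun h => hau h.symm)
        (fun h => hav h.symm) (fun h => (ht u hu).2 h.symm) (fun h => (ht v hv).2 h.symm)
        (fun h => (ht q hq).2 h.symm)
    · exact hh a b q u v hab haq ((heq q hq).1 haq) hqu huv hau (fun h => hau ((heq u hu).2 h)) hav
        (fun h => hav ((heq v hv).2 h)) hqv
  intro q₀ hq₀
  refine ⟨fun h => (ht q₀ hq₀).2 (h ▸ hta), fun haq₀ => ?_⟩
  have hC := hQ.conn {v | v ∈ Q ∧ (G.Adj a v ∨ ∃ q ∈ Q, G.Adj a q ∧ G.Adj q v)} (fun _ h => h.1)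
    ⟨q₀, hq₀, Or.inl haq₀⟩ (by
      rintro u ⟨hu, hau | ⟨q, hq, haq, hqu⟩⟩ v hv huv
      · exact ⟨hv, Or.inr ⟨u, hu, hau, huv⟩⟩
      · by_cases hvq : v = q
        · exact ⟨hv, Or.inl (hvq ▸ haq)⟩
        · exact ⟨hv, Or.inl (hstep q hq u hu v hv haq hqu huv hvq)⟩)
  refine hnb {q | G.Adj a q} (fun u hu v hv h1 h2 => sa u hu v hv h1 h2) ?_
  intro u hu v hv h1 h2 huv
  have : u ∈ {v | v ∈ Q ∧ (G.Adj a v ∨ ∃ q ∈ Q, G.Adj a q ∧ G.Adj q v)} := by rw [hC]; exact hu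
  obtain ⟨q, hq, haq, hqu⟩ := this.2.resolve_left h1
  exact h2 (hstep q hq u hu v hv haq hqu huv (fun h => h2 (h ▸ haq)))

/-- No triangle is anticomplete to `Q`: along a shortest walk from such a triangle to `Q` there
would be a hammer. -/
theorem hammer_walk {V : Type} {G : SimpleGraph V} {Q : Set V} (hh : NoHammer G)
    (hQ : Solid G Q) (hnb : NonBip G Q) (hst : StableTraces G Q) (n : ℕ) :
    ∀ t a b q : V, Anti G Q t → G.Adj t a → G.Adj t b → G.Adj a b → q ∈ Q →
      ∀ w : G.Walk t q, w.length = n → False := by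
  induction n using Nat.strong_induction_on with
  | _ n ih =>
    intro t a b q ht hta htb hab hq w hw
    have ha := hammer_triangle hh hQ hnb hst ht hta htb hab
    have hb := hammer_triangle hh hQ hnb hst ht htb hta hab.symm
    cases w with
    | nil => exact (ht t hq).1 rfl
    | @cons _ s _ hts w =>
      cases w with
      | nil => exact (ht _ hq).2 hts
      | @cons _ p _ hsp w =>
        simp only [Walk.length_cons] at hw
        by_cases hsa : G.Adj s a
        · exact ih (w.length + 1) (by omega) s t a q
            (hammer_triangle hh hQ hnb hst ht hts hta hsa) hts.symm hsa hta hq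
            (Walk.cons hsp w) (by simp)
        by_cases hsb : G.Adj s b
        · exact ih (w.length + 1) (by omega) s t b q
            (hammer_triangle hh hQ hnb hst ht hts htb hsb) hts.symm hsb htb hq
            (Walk.cons hsp w) (by simp)
        by_cases hpt : G.Adj t p
        · exact ih (w.length + 1) (by omega) t a b q ht hta htb hab hq (Walk.cons hpt w) (by simp)
        by_cases hpa : G.Adj a p
        · exact ih (w.length + 1) (by omega) a t b q ha hta.symm hab htb hq
            (Walk.cons hpa w) (by simp)
        by_cases hpb : G.Adj b p
        · exact ih (w.length + 1) (by omega) b t a q hb htb.symm hab.symm hta hq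
            (Walk.cons hpb w) (by simp)
        exact hh a b t s p hab hta.symm htb.symm hts hsp (fun h => hsa h.symm)
          (fun h => hsb h.symm) hpa hpb hpt

theorem hammer_false {V : Type} {G : SimpleGraph V} {Q : Set V} (hh : NoHammer G) (hG : Conn G)
    (hQ : Solid G Q) (hnb : NonBip G Q) (hst : StableTraces G Q) {t a b : V} (ht : Anti G Q t)
    (hta : G.Adj t a) (htb : G.Adj t b) (hab : G.Adj a b) : False := by
  obtain ⟨q, hq⟩ := hQ.nontrivial.nonempty
  obtain ⟨w⟩ : G.Reachable t q := hG {v | G.Reachable t v} ⟨t, Reachable.refl t⟩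
    (fun u hu v huv => hu.trans huv.reachable) q
  exact hammer_walk hh hQ hnb hst _ t a b q ht hta htb hab hq w rfl

/-! ### House-free graphs -/

/-- `G` has no induced house: the cycle `abcd` and a vertex `e` adjacent to `a` and `b`. -/
def NoHouse {V : Type} (G : SimpleGraph V) : Prop :=
  ∀ a b c d e, G.Adj a b → G.Adj b c → G.Adj c d → G.Adj d a → G.Adj e a → G.Adj e b →
    ¬ G.Adj a c → ¬ G.Adj b d → ¬ G.Adj e c → ¬ G.Adj e d → False

/-- Two adjacent vertices `x`, `z` whose traces on `Q` are stable and meet have equal traces. -/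
theorem house_trace_sub {V : Type} {G : SimpleGraph V} {Q : Set V} (hb : NoBull G) (hh : NoHouse G)
    (hQ : Solid G Q) {x z : V} (hxz : G.Adj x z)
    (sx : ∀ q ∈ Q, ∀ q' ∈ Q, G.Adj x q → G.Adj x q' → ¬ G.Adj q q')
    (sz : ∀ q ∈ Q, ∀ q' ∈ Q, G.Adj z q → G.Adj z q' → ¬ G.Adj q q')
    {q : V} (hq : q ∈ Q) (hxq : G.Adj x q) (hzq : G.Adj z q) :
    ∀ p ∈ Q, G.Adj x p → G.Adj z p := by
  intro p hp hxp
  by_contra hzp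
  obtain ⟨r, hr, hqr⟩ : ∃ r ∈ Q, G.Adj q r := by
    by_contra! h
    have := hQ.conn {q} (by simpa using hq) ⟨q, rfl⟩ (by
      rintro u rfl v hv huv
      exact absurd huv (h v hv))
    have h2 := hQ.nontrivial
    rw [← this] at h2
    exact Set.not_nontrivial_singleton h2
  have hxr : ¬ G.Adj x r := fun h => sx q hq r hr hxq h hqr
  have hzr : ¬ G.Adj z r := fun h => sz q hq r hr hzq h hqr
  have hqp : ¬ G.Adj q p := sx q hq p hp hxq hxp
  by_cases hpr : G.Adj p r
  · exact hh x q r p z hxq hqr hpr.symm hxp.symm hxz.symm hzq hxr hqp hzr hzp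
  · exact hb x q z p r hxq hxz hzq.symm hxp hqr hxr hqp hzp hzr hpr

theorem house_false {V : Type} {G : SimpleGraph V} {Q : Set V} (hb : NoBull G) (hh : NoHouse G)
    (hG : Conn G) (hGp : PrimeOn G Set.univ) (hQ : Solid G Q) (hst : StableTraces G Q)
    {t a b : V} (ht : Anti G Q t) (hta : G.Adj t a) (htb : G.Adj t b) (hab : G.Adj a b) :
    False := by
  -- in a prime (bull, house)-free graph a neighbourhood is stable or connected
  have H1 : ∀ c : V, ∀ Y : Set V, (∀ u ∈ Y, G.Adj c u) →
      (∀ u ∈ Y, ∀ v, G.Adj c v → G.Adj u v → v ∈ Y) → ∀ u ∈ Y, ∀ v ∈ Y, G.Adj u v →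
      ∀ p, G.Adj c p → p ∈ Y := by
    intro c Y hY hcl u hu v hv huv p hcp
    by_contra hpY
    have := hGp.eq_of_edge (Set.subset_univ Y) hu hv huv (by
      intro r _ hrY u hu v hv huv hru
      by_contra hrv
      have hcu := hY u hu
      have hcv := hY v hv
      have hcr : ¬ G.Adj c r := fun h => hrY (hcl u hu r h hru.symm)
      have hpu : ¬ G.Adj u p := fun h => hpY (hcl u hu p hcp h)
      have hpv : ¬ G.Adj v p := fun h => hpY (hcl v hv p hcp h)
      have hrc : r ≠ c := fun h => hrv (h ▸ hcv)
      by_cases hpr : G.Adj p r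
      · exact hh c u r p v hcu hru.symm hpr.symm hcp.symm hcv.symm huv.symm hcr hpu
          (fun h => hrv h.symm) hpv
      · exact hb c u v p r hcu hcv huv hcp hru.symm hcr hpu hpv (fun h => hrv h.symm) hpr)
    exact hpY (this ▸ Set.mem_univ p)
  -- hence every edge lies in a triangle
  have H2 : ∀ c p, G.Adj c p → ∃ u, G.Adj c u ∧ G.Adj p u := by
    have h0 : ∀ c, (∃ u v, G.Adj c u ∧ G.Adj c v ∧ G.Adj u v) →
        ∀ p, G.Adj c p → ∃ u, G.Adj c u ∧ G.Adj p u := by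
      rintro c ⟨u, v, hcu, hcv, huv⟩ p hcp
      have := H1 c {u | G.Adj c u ∧ ∃ w, G.Adj c w ∧ G.Adj u w} (fun _ h => h.1)
        (fun u hu v hcv huv => ⟨hcv, u, hu.1, huv.symm⟩) u ⟨hcu, v, hcv, huv⟩ v
        ⟨hcv, u, hcu, huv.symm⟩ huv p hcp
      exact this.2
    have h1 := hG {c | ∃ u v, G.Adj c u ∧ G.Adj c v ∧ G.Adj u v} ⟨t, a, b, hta, htb, hab⟩ (by
      intro c hc p hcp
      obtain ⟨u, hcu, hpu⟩ := h0 c hc p hcp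
      exact ⟨c, u, hcp.symm, hpu, hcu⟩)
    exact fun c => h0 c (h1 c)
  -- and all neighbourhoods are connected
  have H3 : ∀ c : V, ∀ Y : Set V, (∀ u ∈ Y, G.Adj c u) →
      (∀ u ∈ Y, ∀ v, G.Adj c v → G.Adj u v → v ∈ Y) → Y.Nonempty → ∀ p, G.Adj c p → p ∈ Y := by
    rintro c Y hY hcl ⟨u, hu⟩ p hcp
    obtain ⟨v, hcv, huv⟩ := H2 c u (hY u hu)
    exact H1 c Y hY hcl u hu v (hcl u hu v hcv huv) huv p hcp
  -- an edge between `Q ∪ N(Q)` and the rest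
  obtain ⟨x, q, y, hq, hxq, hy, hxy⟩ : ∃ x q y, q ∈ Q ∧ G.Adj x q ∧ Anti G Q y ∧ G.Adj x y := by
    by_contra! h
    obtain ⟨q, hq⟩ := hQ.nontrivial.nonempty
    have := hG {y | Anti G Q y} ⟨t, ht⟩ (by
      intro y hy x hyx p hp
      refine ⟨fun hxp => (hy p hp).2 (hxp ▸ hyx), fun hxp => h x p y hp hxp hy hyx.symm⟩) q
    exact (this q hq).1 rfl
  -- connectedness of `N(x)` gives a triangle `x z y'` with `y'` anticomplete to `Q`
  obtain ⟨z, y', hxz, hzB, hzQ, hy', hxy', hzy'⟩ : ∃ z y', G.Adj x z ∧ ¬ Anti G Q z ∧ z ∉ Q ∧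
      Anti G Q y' ∧ G.Adj x y' ∧ G.Adj z y' := by
    by_contra! h
    have := H3 x {y | G.Adj x y ∧ Anti G Q y} (fun _ h => h.1) (by
      rintro u ⟨hxu, hu⟩ v hxv huv
      refine ⟨hxv, ?_⟩
      by_contra hvB
      exact h v u hxv hvB (fun hv => (hu v hv).2 huv) hu hxu huv.symm) ⟨y, hxy, hy⟩ q hxq
    exact (this.2 q hq).1 rfl
  obtain ⟨p, hp, hzp⟩ : ∃ p ∈ Q, G.Adj z p := by
    by_contra! h
    exact hzB fun q hq => ⟨fun hh => hzQ (hh ▸ hq), h q hq⟩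
  have sx := hst x y hxy hy
  have sz := hst z y' hzy' hy'
  -- the traces of `x` and `z` meet, so they coincide
  obtain ⟨s, hs, hxs, hzs⟩ : ∃ s ∈ Q, G.Adj x s ∧ G.Adj z s := by
    by_contra! h
    have hzq := h q hq hxq
    have hxp : ¬ G.Adj x p := fun hh => h p hp hh hzp
    by_cases hqp : G.Adj q p
    · exact hh x z p q y' hxz hzp hqp.symm hxq.symm hxy'.symm hzy'.symm hxp hzq (hy' p hp).2
        (hy' q hq).2
    · exact hb x z y' q p hxz hxy' hzy' hxq hzp hxp hzq (hy' q hq).2 (hy' p hp).2 hqp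
  have hxz' : ∀ p ∈ Q, (G.Adj z p ↔ G.Adj x p) := fun p hp =>
    ⟨house_trace_sub hb hh hQ hxz.symm sz sx hs hzs hxs p hp,
      house_trace_sub hb hh hQ hxz sx sz hs hxs hzs p hp⟩
  -- the components of the vertices of the same type as `x` are homogeneous
  set X : Set V := {w | (∃ y, Anti G Q y ∧ G.Adj w y) ∧ ∀ p ∈ Q, (G.Adj w p ↔ G.Adj x p)} with hX
  have hXs : ∀ w ∈ X, ∀ q ∈ Q, ∀ q' ∈ Q, G.Adj w q → G.Adj w q' → ¬ G.Adj q q' := by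
    rintro w ⟨⟨y, hy, hwy⟩, -⟩
    exact hst w y hwy hy
  have hfin := hGp.eq_of_edge (Set.subset_univ X) (u₀ := x) (u₁ := z)
    ⟨⟨y, hy, hxy⟩, fun _ _ => Iff.rfl⟩ ⟨⟨y', hy', hzy'⟩, hxz'⟩ hxz (by
    intro r _ hrX u hu v hv huv hru
    by_contra hrv
    have su := hXs u hu
    have hux := hu.2
    have hvx := hv.2
    have hrQ : r ∉ Q := fun hr => hrv ((hvx r hr).2 ((hux r hr).1 hru.symm)).symm
    -- `r` is complete to the common trace
    have hrS : ∀ q ∈ Q, G.Adj x q → G.Adj r q := by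
      intro q hq hxq
      by_contra hrq
      have huq := (hux q hq).2 hxq
      have hvq := (hvx q hq).2 hxq
      obtain ⟨q₁, hq₁, hqq₁⟩ : ∃ q₁ ∈ Q, G.Adj q q₁ := by
        by_contra! h
        have := hQ.conn {q} (by simpa using hq) ⟨q, rfl⟩ (by
          rintro u rfl v hv huv
          exact absurd huv (h v hv))
        have h2 := hQ.nontrivial
        rw [← this] at h2
        exact Set.not_nontrivial_singleton h2
      have hxq₁ : ¬ G.Adj x q₁ := fun h => sx q hq q₁ hq₁ hxq h hqq₁
      have huq₁ : ¬ G.Adj u q₁ := fun h => hxq₁ ((hux q₁ hq₁).1 h)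
      have hvq₁ : ¬ G.Adj v q₁ := fun h => hxq₁ ((hvx q₁ hq₁).1 h)
      by_cases hrq₁ : G.Adj r q₁
      · exact hh u q q₁ r v huq hqq₁ hrq₁.symm hru huv.symm hvq huq₁ (fun h => hrq h.symm) hvq₁
          (fun h => hrv h.symm)
      · exact hb u q v r q₁ huq huv hvq.symm hru.symm hqq₁ huq₁ (fun h => hrq h.symm)
          (fun h => hrv h.symm) hvq₁ hrq₁
    have hus := (hux s hs).2 hxs
    have hrs := hrS s hs hxs
    -- `r` has no neighbour anticomplete to `Q`, else it would have the type of `x`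
    have hrB : ∀ y, Anti G Q y → ¬ G.Adj r y := by
      intro y hy hry
      have sr := hst r y hry hy
      exact hrX ⟨⟨y, hy, hry⟩, fun p hp => ⟨fun h => (hux p hp).1
        (house_trace_sub hb hh hQ hru sr su hs hrs hus p hp h), fun h => hrS p hp h⟩⟩
    obtain ⟨yu, hyu, huyu⟩ := hu.1
    have hryu := hrB yu hyu
    have hNsub : ∀ q ∈ Q, G.Adj x q → ∀ q₁ ∈ Q, G.Adj q q₁ → G.Adj r q₁ := by
      intro q hq hxq q₁ hq₁ hqq₁
      by_contra hrq₁
      have huq := (hux q hq).2 hxq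
      exact hb u q r yu q₁ huq hru.symm (hrS q hq hxq).symm huyu hqq₁
        (fun h => su q hq q₁ hq₁ huq h hqq₁) (fun h => (hyu q hq).2 h.symm) hryu hrq₁
        (hyu q₁ hq₁).2
    have hNsup : ∀ q ∈ Q, G.Adj x q → ∀ p ∈ Q, G.Adj r p → ¬ G.Adj x p → G.Adj q p := by
      intro q hq hxq p hp hrp hxp
      by_contra hqp
      have huq := (hux q hq).2 hxq
      exact hb u r q yu p hru.symm huq (hrS q hq hxq) huyu hrp (fun h => hxp ((hux p hp).1 h))
        hryu (fun h => (hyu q hq).2 h.symm) hqp (hyu p hp).2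
    obtain ⟨q', hq', hrq', hxq', q'', hq'', hqq, hrq'', hxq''⟩ : ∃ q' ∈ Q, G.Adj r q' ∧
        ¬ G.Adj x q' ∧ ∃ q'' ∈ Q, G.Adj q' q'' ∧ ¬ G.Adj r q'' ∧ ¬ G.Adj x q'' := by
      by_contra! h
      have h1 := hQ.conn {q | q ∈ Q ∧ G.Adj r q} (fun _ h => h.1) ⟨s, hs, hrs⟩ (by
        rintro c ⟨hc, hrc⟩ d hd hcd
        refine ⟨hd, ?_⟩
        by_cases hxc : G.Adj x c
        · exact hNsub c hc hxc d hd hcd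
        · by_contra hrd
          exact hrd (hrS d hd (h c hc hrc hxc d hd hcd hrd)))
      have h2 := hQ.coconn {q | q ∈ Q ∧ G.Adj x q} (fun _ h => h.1) ⟨s, hs, hxs⟩ (by
        rintro c ⟨hc, hxc⟩ d hd hdX
        have hd' : d ∈ {q | q ∈ Q ∧ G.Adj r q} := by rw [h1]; exact hd
        exact hNsup c hc hxc d hd hd'.2 fun hh => hdX ⟨hd, hh⟩)
      obtain ⟨c, hc, hsc⟩ : ∃ c ∈ Q, G.Adj s c := by
        by_contra! h
        have := hQ.conn {s} (by simpa using hs) ⟨s, rfl⟩ (by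
          rintro u rfl v hv huv
          exact absurd huv (h v hv))
        have h2 := hQ.nontrivial
        rw [← this] at h2
        exact Set.not_nontrivial_singleton h2
      have hc' : c ∈ {q | q ∈ Q ∧ G.Adj x q} := by rw [h2]; exact hc
      exact sx s hs c hc hxs hc'.2 hsc
    have hsq' := hNsup s hs hxs q' hq' hrq' hxq'
    have hsq'' : ¬ G.Adj s q'' := fun h => hrq'' (hNsub s hs hxs q'' hq'' h)
    exact hb s q' r v q'' hsq' hrs.symm hrq'.symm ((hvx s hs).2 hxs).symm hqq hsq''
      (fun h => hxq' ((hvx q' hq').1 h.symm)) hrv hrq'' (fun h => hxq'' ((hvx q'' hq'').1 h)))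
  have hqX : q ∈ X := hfin ▸ Set.mem_univ q
  obtain ⟨⟨y₀, hy₀, hqy₀⟩, -⟩ := hqX
  exact (hy₀ q hq).2 hqy₀.symm

/-! ### Diamond-free graphs -/

/-- `G` has no induced diamond: the triangles `abc` and `abd`. -/
def NoDiamond {V : Type} (G : SimpleGraph V) : Prop :=
  ∀ a b c d, G.Adj a b → G.Adj a c → G.Adj a d → G.Adj b c → G.Adj b d → c ≠ d → G.Adj c d

/-- In a (bull, diamond)-free graph without simplicial vertices, the non-neighbours of a vertex in
a triangle form a clique. -/
theorem diamond_false {V : Type} {G : SimpleGraph V} {Q : Set V} (hb : NoBull G)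
    (hd : NoDiamond G) (hG : Conn G) (hns : Core G Set.univ) (hQ : Core G Q) {t a b : V}
    (ht : Anti G Q t) (hta : G.Adj t a) (htb : G.Adj t b) (hab : G.Adj a b) : False := by
  -- each vertex `x` of a triangle has a private neighbour
  have N1 : ∀ x y z, G.Adj x y → G.Adj x z → G.Adj y z → ∃ u, G.Adj x u ∧ ¬ G.Adj u y ∧
      ¬ G.Adj u z ∧ u ≠ y ∧ u ≠ z := by
    intro x y z hxy hxz hyz
    obtain ⟨u, -, v, -, hxu, hxv, huv, hn⟩ := hns.no_simplicial x (Set.mem_univ x)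
    have key : ∀ u, G.Adj x u → u ≠ y → ¬ G.Adj u y → ∃ u, G.Adj x u ∧ ¬ G.Adj u y ∧
      ¬ G.Adj u z ∧ u ≠ y ∧ u ≠ z := by
      intro u hxu huy hn
      exact ⟨u, hxu, hn, fun h => hn (hd x z u y hxz hxu hxy h.symm hyz.symm huy), huy,
        fun h => hn (h ▸ hyz.symm)⟩
    by_cases h1 : u = y
    · exact key v hxv (fun h => huv (h1.trans h.symm)) (fun h => hn (h1 ▸ h.symm))
    by_cases h2 : G.Adj u y
    · by_cases h3 : v = y
      · exact absurd (h3 ▸ h2) hn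
      · exact key v hxv h3 fun h => hn (hd x y u v hxy hxu hxv h2.symm h.symm huv)
    · exact key u hxu h1 h2
  -- private neighbours of two vertices of a triangle are adjacent
  have N2 : ∀ x y z u v, G.Adj x y → G.Adj x z → G.Adj y z → G.Adj x u → ¬ G.Adj u y →
      ¬ G.Adj u z → G.Adj y v → ¬ G.Adj v x → ¬ G.Adj v z → G.Adj u v := by
    intro x y z u v hxy hxz hyz hxu huy huz hyv hvx hvz
    by_contra huv
    exact hb x y z u v hxy hxz hyz hxu hyv (fun h => hvx h.symm) (fun h => huy h.symm)
      (fun h => huz h.symm) (fun h => hvz h.symm) huv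
  -- the private neighbour is unique
  have N3 : ∀ x y z u w, G.Adj x y → G.Adj x z → G.Adj y z → G.Adj x u → ¬ G.Adj u y →
      u ≠ y → G.Adj x w → w ≠ y → ¬ G.Adj w y → w = u := by
    intro x y z u w hxy hxz hyz hxu huy huy' hxw hwy' hwy
    have huz : ¬ G.Adj u z := fun h => huy (hd x z u y hxz hxu hxy h.symm hyz.symm huy')
    have hwz : ¬ G.Adj w z := fun h => hwy (hd x z w y hxz hxw hxy h.symm hyz.symm hwy')
    obtain ⟨v, hyv, hvx, hvz, hvx', -⟩ := N1 y x z hxy.symm hyz hxz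
    obtain ⟨r, hzr, hrx, hry, hrx', -⟩ := N1 z x y hxz.symm hyz.symm hxy
    have huv := N2 x y z u v hxy hxz hyz hxu huy huz hyv hvx hvz
    have hwv := N2 x y z w v hxy hxz hyz hxw hwy hwz hyv hvx hvz
    have hur := N2 x z y u r hxz hxy hyz.symm hxu huz huy hzr hrx hry
    have hwr := N2 x z y w r hxz hxy hyz.symm hxw hwz hwy hzr hrx hry
    have hvr := N2 y z x v r hyz hxy.symm hxz.symm hyv hvz hvx hzr hry hrx
    by_contra hwu
    have := hd v r w u hvr hwv.symm huv.symm hwr.symm hur.symm hwu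
    exact hvx (hd u w v x this.symm huv hxu.symm hwv hxw.symm hvx')
  obtain ⟨u, htu, hua, hub, hua', hub'⟩ := N1 t a b hta htb hab
  obtain ⟨v, hav, hvt, hvb, hvt', hvb'⟩ := N1 a t b hta.symm hab htb
  obtain ⟨r, hbr, hrt, hra, hrt', hra'⟩ := N1 b t a htb.symm hab.symm hta
  have huv := N2 t a b u v hta htb hab htu hua hub hav hvt hvb
  have hur := N2 t b a u r htb hta hab.symm htu hub hua hbr hrt hra
  have hvr := N2 a b t v r hab hta.symm htb.symm hav hvb hvt hbr hra hrt
  -- a neighbour of a vertex `p` in a triangle `x p y` is a neighbour of `x`, or of the private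
  -- neighbour `u` of `x`
  have step : ∀ x p y u w, G.Adj x p → G.Adj x y → G.Adj p y → G.Adj x u → ¬ G.Adj u p →
      ¬ G.Adj u y → G.Adj p w → w = x ∨ G.Adj x w ∨ G.Adj u w := by
    intro x p y u w hxp hxy hpy hxu hup huy hpw
    by_contra! h
    obtain ⟨h1, h2, h3⟩ := h
    have hwy : ¬ G.Adj w y := fun hh =>
      h2 (hd p y x w hpy hxp.symm hpw hxy.symm hh.symm (Ne.symm h1))
    exact h3 (N2 x p y u w hxp hxy hpy hxu hup huy hpw (fun hh => h2 hh.symm) hwy)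
  -- a vertex `x` in a triangle `x y z` with private neighbour `u`: all other neighbours of `x`
  -- lie in triangles with `x` whose other vertices are not adjacent to `u`
  have tri : ∀ x y z u p, G.Adj x y → G.Adj x z → G.Adj y z → G.Adj x u → ¬ G.Adj u y →
      ¬ G.Adj u z → u ≠ y → G.Adj x p → p ≠ u → ∃ s, G.Adj x s ∧ G.Adj p s ∧ ¬ G.Adj u s ∧
      ¬ G.Adj u p := by
    intro x y z u p hxy hxz hyz hxu huy huz huy' hxp hpu
    by_cases hpy : p = y
    · exact ⟨z, hxz, hpy ▸ hyz, huz, hpy ▸ huy⟩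
    · have hpy' : G.Adj p y := by
        by_contra hh
        exact hpu (N3 x y z u p hxy hxz hyz hxu huy huy' hxp hpy hh)
      exact ⟨y, hxy, hpy', huy, fun hh =>
        huy (hd x p u y hxp hxu hxy hh.symm hpy' huy')⟩
  have hcov := hG {w | w = t ∨ G.Adj t w ∨ G.Adj u w} ⟨t, Or.inl rfl⟩ (by
    intro p hp w hpw
    rcases hp with rfl | hp | hp
    · exact Or.inr (Or.inl hpw)
    · by_cases hpu : p = u
      · exact Or.inr (Or.inr (hpu ▸ hpw))
      · obtain ⟨s, hts, hps, hus, hup⟩ := tri t a b u p hta htb hab htu hua hub hua' hp hpu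
        exact step t p s u w hp hts hps htu hup hus hpw
    · by_cases hpt : p = t
      · exact Or.inr (Or.inl (hpt ▸ hpw))
      · obtain ⟨s, hus, hps, hts, htp⟩ := tri u v r t p huv hur hvr htu.symm
          (fun h => hvt h.symm) (fun h => hrt h.symm) (Ne.symm hvt') hp hpt
        rcases step u p s t w hp hus hps htu.symm htp hts hpw with h | h | h
        · exact Or.inr (Or.inl (h ▸ htu))
        · exact Or.inr (Or.inr h)
        · exact Or.inr (Or.inl h))
  -- so `Q` lies in the clique `N(u) \ {t}`
  obtain ⟨c, hc⟩ := hQ.ne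
  obtain ⟨p, hp, w, hw, -, -, hpw, hn⟩ := hQ.no_simplicial c hc
  have hQu : ∀ q ∈ Q, G.Adj u q ∧ q ≠ t ∧ (q = v ∨ G.Adj q v) := by
    intro q hq
    have hqt : q ≠ t := (ht q hq).1.symm
    have huq : G.Adj u q := by
      rcases hcov q with h | h | h
      · exact absurd h hqt
      · exact absurd h (ht q hq).2
      · exact h
    refine ⟨huq, hqt, ?_⟩
    by_contra! h
    exact hqt (N3 u v r t q huv hur hvr htu.symm (fun h => hvt h.symm) (Ne.symm hvt') huq h.1 h.2)
  obtain ⟨hup, -, hpv⟩ := hQu p hp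
  obtain ⟨huw, -, hwv⟩ := hQu w hw
  rcases hpv with rfl | hpv <;> rcases hwv with rfl | hwv
  · exact hpw rfl
  · exact hn hwv.symm
  · exact hn hpv
  · exact hn (hd u v p w huv hup huw hpv.symm hwv.symm hpw)

/-! ### Weighted divisibility and minimal counterexamples -/

section divide
open Classical

theorem WPerf.map {V V' : Type} {G : SimpleGraph V} {G' : SimpleGraph V'} {s : Set V}
    (h : WPerf G s) (φ : V → V') (hinj : Set.InjOn φ s)
    (hadj : ∀ u ∈ s, ∀ v ∈ s, G'.Adj (φ u) (φ v) ↔ G.Adj u v) : WPerf G' (φ '' s) := by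
  intro w n hw
  obtain ⟨c, hc, hd⟩ := h (fun v => w (φ v)) n (by
    intro K hK hKc
    have := hw (K.image φ) (by
      rw [Finset.coe_image]; exact Set.image_mono hK) (by
      rw [Finset.coe_image]
      rintro _ ⟨u, hu, rfl⟩ _ ⟨v, hv, rfl⟩ hne
      exact (hadj u (hK hu) v (hK hv)).2 (hKc hu hv (fun e => hne (e ▸ rfl))))
    rwa [Finset.sum_image (hinj.mono hK)] at this)
  have hex : ∀ v ∈ φ '' s, ∃ C : Finset ℕ, ∃ u ∈ s, φ u = v ∧ C = c u := by
    rintro _ ⟨u, hu, rfl⟩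
    exact ⟨_, u, hu, rfl, rfl⟩
  choose! C hC using hex
  refine ⟨C, ?_, ?_⟩
  · intro v hv
    obtain ⟨u, hu, rfl, he⟩ := hC v hv
    rw [he]
    exact hc u hu
  · intro v hv v' hv' hvv
    obtain ⟨u, hu, rfl, he⟩ := hC v hv
    obtain ⟨u', hu', rfl, he'⟩ := hC v' hv'
    rw [he, he']
    exact hd u hu u' hu' ((hadj u hu u' hu').1 hvv)

/-- `G[s]` splits into a weighted perfect part `P` and a part `s \ P` whose cliques are all lighter,
with respect to `w`, than some clique of `G[s]`. -/
def WDiv {V : Type} (G : SimpleGraph V) (s : Set V) (w : V → ℕ) : Prop :=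
  ∃ P ⊆ s, WPerf G P ∧ ∀ L : Finset V, (L : Set V) ⊆ s \ P → G.IsClique (L : Set V) →
    ∃ K : Finset V, (K : Set V) ⊆ s ∧ G.IsClique (K : Set V) ∧ ∑ v ∈ L, w v < ∑ v ∈ K, w v

theorem WDiv.of_induce {V : Type} {G : SimpleGraph V} {s : Set V} {w : V → ℕ}
    (h : WDiv (G.induce s) Set.univ (fun v => w v)) : WDiv G s w := by
  obtain ⟨P, -, hP, hL⟩ := h
  refine ⟨Subtype.val '' P, ?_, ?_, ?_⟩
  · rintro _ ⟨v, -, rfl⟩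
    exact v.2
  · exact hP.map Subtype.val (Subtype.val_injective.injOn) (fun u _ v _ => by simp)
  · intro L hLs hLc
    obtain ⟨K, -, hK, hlt⟩ := hL (L.subtype (· ∈ s)) (by
      intro v hv
      refine ⟨Set.mem_univ _, fun hvP => ?_⟩
      rw [Finset.mem_coe, Finset.mem_subtype] at hv
      exact (hLs hv).2 ⟨v, hvP, rfl⟩) (by
      intro u hu v hv huv
      rw [Finset.mem_coe, Finset.mem_subtype] at hu hv
      exact hLc hu hv (fun e => huv (Subtype.ext e)))
    refine ⟨K.map (Function.Embedding.subtype _), ?_, ?_, ?_⟩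
    · intro v hv
      obtain ⟨u, -, rfl⟩ := Finset.mem_map.1 hv
      exact u.2
    · intro u hu v hv huv
      obtain ⟨a, ha, rfl⟩ := Finset.mem_map.1 hu
      obtain ⟨b, hb, rfl⟩ := Finset.mem_map.1 hv
      exact hK ha hb (fun e => huv (e ▸ rfl))
    · rw [Finset.sum_map]
      refine lt_of_eq_of_lt ?_ hlt
      rw [Finset.sum_subtype_of_mem (fun v => w v) (fun v hv => (hLs hv).1)]

/-- A simplicial vertex can be added to the perfect part. -/
theorem div_of_simplicial {V : Type} [Fintype V] {G : SimpleGraph V} {w : V → ℕ}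
    (ih : ∀ s : Set V, s ≠ Set.univ → s.Nonempty → ∀ w : V → ℕ, (∀ v, 0 < w v) → WDiv G s w)
    (hw : ∀ v, 0 < w v) (v : V) (hv : ∀ a b, G.Adj v a → G.Adj v b → a ≠ b → G.Adj a b) :
    WDiv G Set.univ w := by
  rcases Set.eq_empty_or_nonempty ({v}ᶜ : Set V) with he | hne
  · have hall : ∀ u, u = v := by
      intro u
      by_contra hu
      have : u ∈ ({v}ᶜ : Set V) := hu
      rw [he] at this
      exact this
    refine ⟨Set.univ, subset_rfl, WPerf.of_bipartite Set.univ ?_ ?_, ?_⟩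
    · intro a _ b _ _ _ hab
      exact hab.ne ((hall a).trans (hall b).symm)
    · intro a _ b _ h
      exact absurd (Set.mem_univ a) h
    · intro L hL _
      have : L = ∅ := by
        by_contra hne
        obtain ⟨x, hx⟩ := Finset.nonempty_iff_ne_empty.2 hne
        exact (hL hx).2 (Set.mem_univ _)
      subst this
      exact ⟨{v}, Set.subset_univ _, by simp, by simpa using hw v⟩
  · obtain ⟨P, -, hP, hL⟩ := ih {v}ᶜ (by
      intro h
      have : v ∈ ({v}ᶜ : Set V) := h ▸ Set.mem_univ v
      exact this rfl) hne w hw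
    refine ⟨insert v P, Set.subset_univ _, hP.insert_simplicial v
      (fun a _ b _ => hv a b), ?_⟩
    intro L hLs hLc
    obtain ⟨K, -, hK, hlt⟩ := hL L (fun x hx => ⟨fun e => (hLs hx).2 (Or.inl e),
      fun hxP => (hLs hx).2 (Or.inr hxP)⟩) hLc
    exact ⟨K, Set.subset_univ _, hK, hlt⟩

/-- If the non-neighbours of `v` are weighted perfect, they form together with `v` the perfect
part, and a clique of neighbours of `v` becomes heavier by adding `v`. -/
theorem div_of_antiNbhd {V : Type} [Fintype V] {G : SimpleGraph V} {w : V → ℕ}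
    (hw : ∀ v, 0 < w v) (v : V) (h : WPerf G {u | v ≠ u ∧ ¬ G.Adj v u}) :
    WDiv G Set.univ w := by
  refine ⟨_, Set.subset_univ _, h.insert_simplicial v
    (fun a ha b _ hva => absurd hva ha.2), ?_⟩
  intro L hL hLc
  have hadj : ∀ u ∈ L, G.Adj v u := by
    intro u hu
    by_contra hn
    exact (hL hu).2 (by
      by_cases e : v = u
      · exact Or.inl e.symm
      · exact Or.inr ⟨e, hn⟩)
  refine ⟨insert v L, Set.subset_univ _, insert_clique hLc hadj, ?_⟩
  rw [Finset.sum_insert (fun hv => (hadj v hv).ne rfl)]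
  have := hw v
  omega

theorem div_of_homog {V : Type} [Fintype V] {G : SimpleGraph V} {w : V → ℕ}
    (ih : ∀ s : Set V, s ≠ Set.univ → s.Nonempty → ∀ w : V → ℕ, (∀ v, 0 < w v) → WDiv G s w)
    (hw : ∀ v, 0 < w v) {X : Set V} (hX : Homog G Set.univ X) (hns : ¬ X.Subsingleton)
    (hne : X ≠ Set.univ) : WDiv G Set.univ w := by
  obtain ⟨x₀, hx₀, y₀, hy₀, hxy⟩ := Set.not_subsingleton_iff.1 hns
  obtain ⟨K₀, hK₀, hK₀c, hK₀m⟩ := exists_max_clique G w X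
  have hm : 0 < ∑ v ∈ K₀, w v := by
    have := hK₀m {x₀} (by simpa using hx₀) (by simp)
    rw [Finset.sum_singleton] at this
    exact (hw x₀).trans_le this
  obtain ⟨P, hPs, hP, hPL⟩ := ih (insert x₀ (Set.univ \ X)) (by
    intro h
    have : y₀ ∈ insert x₀ (Set.univ \ X) := by rw [h]; exact Set.mem_univ y₀
    rcases this with h | h
    · exact hxy h.symm
    · exact h.2 hy₀) ⟨x₀, Or.inl rfl⟩ (Function.update w x₀ (∑ v ∈ K₀, w v)) (by
    intro v
    by_cases e : v = x₀
    · subst e; rwa [Function.update_self]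
    · rw [Function.update_of_ne e]; exact hw v)
  -- a clique disjoint from `X` has the same weight in the contracted graph
  have hout : ∀ L : Finset V, (∀ v ∈ L, v ∉ X ∧ v ∉ P) → G.IsClique (L : Set V) →
      ∃ K : Finset V, (K : Set V) ⊆ Set.univ ∧ G.IsClique (K : Set V) ∧
        ∑ v ∈ L, w v < ∑ v ∈ K, w v := by
    intro L hL hLc
    obtain ⟨K', hK', hK'c, hlt⟩ := hPL L
      (fun v hv => ⟨Or.inr ⟨Set.mem_univ _, (hL v hv).1⟩, (hL v hv).2⟩) hLc
    obtain ⟨K, hK, hKc, hsum⟩ :=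
      hX.lift_clique (Set.subset_univ _) hx₀ w hK₀ hK₀c hK' hK'c
    refine ⟨K, hK, hKc, ?_⟩
    rw [hsum]
    refine lt_of_eq_of_lt ?_ hlt
    exact Finset.sum_congr rfl fun v hv => by
      rw [Function.update_of_ne (fun e : v = x₀ => (hL v hv).1 (e ▸ hx₀))]
  -- the part of a clique outside `X` is complete to `X` once the clique meets `X`
  have hcross : ∀ L : Finset V, G.IsClique (L : Set V) → ∀ x ∈ L, x ∈ X → ∀ v ∈ L, v ∉ X →
      G.Adj v x₀ := by
    intro L hLc x hx hxX v hv hvX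
    have hvx : G.Adj v x := hLc hv hx (fun e => hvX (e ▸ hxX))
    rcases hX v (Set.mem_univ _) hvX with h | h
    · exact h x₀ hx₀
    · exact absurd hvx (h x hxX)
  have hsplit : ∀ L : Finset V, L = L.filter (· ∉ X) ∪ L.filter (· ∈ X) := by
    intro L
    ext v
    simp only [Finset.mem_union, Finset.mem_filter]
    tauto
  have hsplit_sum : ∀ L : Finset V,
      ∑ v ∈ L, w v = ∑ v ∈ L.filter (· ∉ X), w v + ∑ v ∈ L.filter (· ∈ X), w v := by
    intro L
    rw [add_comm]
    exact (Finset.sum_filter_add_sum_filter_not L (· ∈ X) w).symm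
  have hfc : ∀ (L : Finset V) (p : V → Prop) [DecidablePred p], G.IsClique (L : Set V) →
      G.IsClique ((L.filter p : Finset V) : Set V) := fun L p _ hL =>
    hL.subset (by intro v hv; exact (Finset.mem_filter.1 hv).1)
  by_cases hxP : x₀ ∈ P
  · obtain ⟨PX, hPX, hPXp, hPXL⟩ := ih X hne ⟨x₀, hx₀⟩ w hw
    have hdisj : ∀ v ∈ P \ {x₀}, v ∉ X := by
      intro v hv hvX
      rcases hPs hv.1 with h | h
      · exact hv.2 h
      · exact h.2 hvX
    refine ⟨(P \ {x₀}) ∪ PX, Set.subset_univ _, ?_, ?_⟩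
    · rcases Set.eq_empty_or_nonempty PX with he | ⟨x₁, hx₁⟩
      · rw [he, Set.union_empty]
        exact hP.mono Set.sdiff_subset
      · refine WPerf.subst (X := PX) (x₀ := x₁) ?_ Set.subset_union_right hx₁ ?_ hPXp
        · intro z hz hzPX
          have hzX : z ∉ X := hdisj z (hz.resolve_right hzPX)
          rcases hX z (Set.mem_univ _) hzX with h | h
          · exact Or.inl fun x hx => h x (hPX hx)
          · exact Or.inr fun x hx => h x (hPX hx)
        · -- `x₀` and `x₁` have the same neighbours outside `X`
          have htw : ∀ v ∈ P \ {x₀}, G.Adj v x₁ ↔ G.Adj v x₀ := by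
            intro v hv
            rcases hX v (Set.mem_univ _) (hdisj v hv) with h | h
            · simp [h x₀ hx₀, h x₁ (hPX hx₁)]
            · simp [h x₀ hx₀, h x₁ (hPX hx₁)]
          have hu : ∀ v ∈ P, v ≠ x₀ → Function.update id x₀ x₁ v = v := by
            intro v _ hv
            rw [Function.update_of_ne hv]; rfl
          have hu0 : Function.update id x₀ x₁ x₀ = x₁ := Function.update_self _ _ _
          have hx₁P : ∀ v ∈ P, v ≠ x₀ → v ≠ x₁ := fun v hv hne e =>
            hdisj v ⟨hv, hne⟩ (e ▸ hPX hx₁)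
          refine (hP.map (G' := G) (Function.update id x₀ x₁) ?_ ?_).mono ?_
          · intro a ha b hb hab
            by_cases ea : a = x₀ <;> by_cases eb : b = x₀
            · rw [ea, eb]
            · rw [ea, hu0, hu b hb eb] at hab
              exact absurd hab.symm (hx₁P b hb eb)
            · rw [eb, hu0, hu a ha ea] at hab
              exact absurd hab (hx₁P a ha ea)
            · rwa [hu a ha ea, hu b hb eb] at hab
          · intro a ha b hb
            by_cases ea : a = x₀ <;> by_cases eb : b = x₀
            · rw [ea, eb]; simp
            · rw [ea, hu0, hu b hb eb, G.adj_comm, G.adj_comm x₀]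
              exact htw b ⟨hb, eb⟩
            · rw [eb, hu0, hu a ha ea]
              exact htw a ⟨ha, ea⟩
            · rw [hu a ha ea, hu b hb eb]
          · rintro v (rfl | ⟨hv, hvn⟩)
            · exact ⟨x₀, hxP, hu0⟩
            · rcases hv with hv | hv
              · exact ⟨v, hv.1, hu v hv.1 hv.2⟩
              · exact absurd hv hvn
    · intro L hL hLc
      by_cases hmeet : ∃ x ∈ L, x ∈ X
      · obtain ⟨x, hx, hxX⟩ := hmeet
        obtain ⟨K₂, hK₂, hK₂c, hlt⟩ := hPXL (L.filter (· ∈ X)) (by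
          intro v hv
          obtain ⟨h1, h2⟩ := Finset.mem_filter.1 hv
          exact ⟨h2, fun h => (hL h1).2 (Or.inr h)⟩) (hfc L _ hLc)
        obtain ⟨h1, h2⟩ := hX.clique_union hx₀ (hfc L (· ∉ X) hLc)
          (fun v hv => ⟨Set.mem_univ _, (Finset.mem_filter.1 hv).2⟩)
          (fun v hv => hcross L hLc x hx hxX v (Finset.mem_filter.1 hv).1
            (Finset.mem_filter.1 hv).2) hK₂c hK₂
        refine ⟨L.filter (· ∉ X) ∪ K₂, Set.subset_univ _, h1, ?_⟩
        rw [Finset.sum_union h2, hsplit_sum L]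
        omega
      · push Not at hmeet
        refine hout L (fun v hv => ⟨hmeet v hv, fun hvP => (hL hv).2 (Or.inl ⟨hvP, ?_⟩)⟩) hLc
        intro e
        exact hmeet v hv (by rw [Set.mem_singleton_iff.1 e]; exact hx₀)
  · refine ⟨P, Set.subset_univ _, hP, ?_⟩
    intro L hL hLc
    by_cases hmeet : ∃ x ∈ L, x ∈ X
    · obtain ⟨x, hx, hxX⟩ := hmeet
      have hadj : ∀ v ∈ L.filter (· ∉ X), G.Adj x₀ v := fun v hv =>
        (hcross L hLc x hx hxX v (Finset.mem_filter.1 hv).1 (Finset.mem_filter.1 hv).2).symm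
      have hx₀L : x₀ ∉ L.filter (· ∉ X) := fun h => (Finset.mem_filter.1 h).2 hx₀
      obtain ⟨K', hK', hK'c, hlt⟩ := hPL (insert x₀ (L.filter (· ∉ X))) (by
        intro v hv
        rcases Finset.mem_insert.1 hv with rfl | hv
        · exact ⟨Or.inl rfl, hxP⟩
        · obtain ⟨h1, h2⟩ := Finset.mem_filter.1 hv
          exact ⟨Or.inr ⟨Set.mem_univ _, h2⟩, (hL h1).2⟩)
        (insert_clique (hfc L _ hLc) hadj)
      obtain ⟨K, hK, hKc, hsum⟩ :=
        hX.lift_clique (Set.subset_univ _) hx₀ w hK₀ hK₀c hK' hK'c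
      refine ⟨K, hK, hKc, ?_⟩
      rw [hsum]
      refine lt_of_le_of_lt ?_ hlt
      rw [Finset.sum_insert hx₀L, Function.update_self, hsplit_sum L, add_comm]
      refine Nat.add_le_add (hK₀m _ ?_ (hfc L _ hLc)) (le_of_eq ?_)
      · intro v hv
        exact (Finset.mem_filter.1 hv).2
      · exact Finset.sum_congr rfl fun v hv => by
          rw [Function.update_of_ne (fun e : v = x₀ => hx₀L (e ▸ hv))]
    · push Not at hmeet
      exact hout L (fun v hv => ⟨hmeet v hv, (hL hv).2⟩) hLc

/-- Two colour classes form the perfect part; the third one contains no edge. -/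
theorem div_of_colorable {V : Type} [Fintype V] [Nonempty V] {G : SimpleGraph V} {w : V → ℕ}
    (hw : ∀ v, 0 < w v) (hc : G.Colorable 3) (hnb : ∀ v, ∃ u, G.Adj v u) :
    WDiv G Set.univ w := by
  obtain ⟨c⟩ := hc
  refine ⟨{v | c v ≠ 2}, Set.subset_univ _, WPerf.of_bipartite {v | c v = 0} ?_ ?_, ?_⟩
  · intro u _ v _ hu hv huv
    exact c.valid huv (Eq.trans hu (Eq.symm hv))
  · intro u hu v hv hu0 hv0 huv
    have := c.valid huv
    simp only [Set.mem_ofPred_eq] at hu hv hu0 hv0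
    generalize c u = x at *
    generalize c v = y at *
    revert x y
    decide
  · intro L hL hLc
    have h2 : ∀ v ∈ L, c v = 2 := by
      intro v hv
      by_contra h
      exact (hL hv).2 h
    rcases L.eq_empty_or_nonempty with rfl | ⟨v, hv⟩
    · obtain ⟨v⟩ := ‹Nonempty V›
      exact ⟨{v}, Set.subset_univ _, by simp, by simpa using hw v⟩
    · obtain ⟨u, hu⟩ := hnb v
      have hL1 : L = {v} := by
        ext x
        rw [Finset.mem_singleton]
        constructor
        · intro hx
          by_contra hne
          exact c.valid (hLc hx hv hne) ((h2 x hx).trans (h2 v hv).symm)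
        · rintro rfl; exact hv
      refine ⟨{v, u}, Set.subset_univ _, pair_clique hu, ?_⟩
      rw [hL1, Finset.sum_singleton, Finset.sum_pair hu.ne]
      have := hw u
      omega

end divide

/-! ### Forbidden induced subgraphs -/

theorem IsFree.induce {α β : Type*} {G : SimpleGraph α} {H : SimpleGraph β} (h : IsFree G H)
    (s : Set α) : IsFree (G.induce s) H := by
  rintro ⟨f, hf⟩
  exact h ⟨f.trans (Function.Embedding.subtype _), fun a b => (hf a b)⟩

/-- A map from a finite graph preserving adjacency and non-adjacency yields an induced copy as soon
as vertices of the pattern have distinct images. -/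
theorem containsInduced_of {V : Type} {G : SimpleGraph V} {n : ℕ} {H : SimpleGraph (Fin n)}
    (f : Fin n → V) (hinj : ∀ i j, i < j → f i ≠ f j)
    (hadj : ∀ i j, i < j → (G.Adj (f i) (f j) ↔ H.Adj i j)) : ContainsInduced G H := by
  refine ⟨⟨f, fun i j hij => ?_⟩, fun i j => ?_⟩
  · rcases lt_trichotomy i j with h | h | h
    · exact absurd hij (hinj i j h)
    · exact h
    · exact absurd hij.symm (hinj j i h)
  · change G.Adj (f i) (f j) ↔ H.Adj i j
    rcases lt_trichotomy i j with h | rfl | h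
    · exact hadj i j h
    · simp
    · rw [G.adj_comm, H.adj_comm]
      exact hadj j i h

theorem noBull_of {V : Type} {G : SimpleGraph V} (h : IsFree G bull) : NoBull G := by
  intro a b c d e
  intros
  apply h
  refine containsInduced_of ![a, b, c, d, e] ?_ ?_
  · intro i j hij
    fin_cases i <;> fin_cases j <;> simp at hij ⊢ <;> rintro rfl <;>
      simp_all [G.adj_comm]
  · intro i j hij
    fin_cases i <;> fin_cases j <;> simp at hij ⊢ <;> simp [bull] <;>
      simp_all

theorem noHammer_of {V : Type} {G : SimpleGraph V} (h : IsFree G hammer) : NoHammer G := by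
  intro a b c d e
  intros
  apply h
  refine containsInduced_of ![a, b, c, d, e] ?_ ?_
  · intro i j hij
    fin_cases i <;> fin_cases j <;> simp at hij ⊢ <;> rintro rfl <;>
      simp_all [G.adj_comm]
  · intro i j hij
    fin_cases i <;> fin_cases j <;> simp at hij ⊢ <;> simp [hammer] <;>
      simp_all

theorem noHouse_of {V : Type} {G : SimpleGraph V} (h : IsFree G house) : NoHouse G := by
  intro a b c d e
  intros
  apply h
  refine containsInduced_of ![a, c, e, d, b] ?_ ?_
  · intro i j hij
    fin_cases i <;> fin_cases j <;> simp at hij ⊢ <;> rintro rfl <;>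
      simp_all [G.adj_comm]
  · intro i j hij
    fin_cases i <;> fin_cases j <;> simp at hij ⊢ <;> simp [house, pathGraph_adj] <;>
      simp_all [G.adj_comm]

theorem noDiamond_of {V : Type} {G : SimpleGraph V} (h : IsFree G diamond) : NoDiamond G := by
  intro a b c d
  intros
  by_contra
  apply h
  refine containsInduced_of ![a, b, c, d] ?_ ?_
  · intro i j hij
    fin_cases i <;> fin_cases j <;> simp at hij ⊢ <;> rintro rfl <;>
      simp_all
  · intro i j hij
    fin_cases i <;> fin_cases j <;> simp at hij ⊢ <;> simp [diamond] <;>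
      simp_all

/-! ### The minimal counterexample -/

section main
open Classical

theorem exists_triangle {V : Type} {G : SimpleGraph V} (h : ¬ IsFree G (cycleGraph 3)) :
    ∃ t a b, G.Adj t a ∧ G.Adj t b ∧ G.Adj a b := by
  obtain ⟨f, hf⟩ := not_not.1 h
  exact ⟨f 0, f 1, f 2, (hf _ _).2 (by rw [cycleGraph_adj]; decide),
    (hf _ _).2 (by rw [cycleGraph_adj]; decide), (hf _ _).2 (by rw [cycleGraph_adj]; decide)⟩

/-- Weighted divisibility of the whole graph, by induction on the number of vertices. A counterexample of
minimal order is prime without simplicial vertices and contains a triangle, and the non-neighbours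
of each vertex of it contain a core. -/
theorem wdiv_univ {γ : Type} [Fintype γ] (F : SimpleGraph γ)
    (h3col : ∀ (V : Type) [Fintype V] (G : SimpleGraph V),
        IsFree G F → IsFree G (SimpleGraph.cycleGraph 3) → G.Colorable 3) (n : ℕ) :
    ∀ (V : Type) [Fintype V] [Nonempty V] (G : SimpleGraph V), Fintype.card V = n → IsFree G F →
      IsFree G bull → (IsFree G house ∨ IsFree G hammer ∨ IsFree G diamond) →
      ∀ w : V → ℕ, (∀ v, 0 < w v) → WDiv G Set.univ w := by
  induction n using Nat.strong_induction_on with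
  | _ n ihn =>
    intro V _ _ G hn hF hbull hH w hw
    have ih : ∀ s : Set V, s ≠ Set.univ → s.Nonempty → ∀ w : V → ℕ, (∀ v, 0 < w v) →
        WDiv G s w := by
      intro s hs hne w hw
      have : Nonempty s := hne.to_subtype
      refine WDiv.of_induce (ihn (Fintype.card s) ?_ s (G.induce s) rfl (hF.induce s)
        (hbull.induce s) (hH.imp (·.induce s) (Or.imp (·.induce s) (·.induce s))) _
        (fun v => hw v))
      rw [← hn]
      obtain ⟨v, hv⟩ := (Set.ne_univ_iff_exists_notMem s).1 hs
      exact Fintype.card_subtype_lt (p := (· ∈ s)) hv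
    by_contra hnot
    have hcore : Core G Set.univ := by
      refine ⟨Set.univ_nonempty, ?_, ?_⟩
      · intro X _ hX
        by_contra! h
        exact hnot (div_of_homog ih hw hX (Set.not_subsingleton_iff.2 h.1) h.2)
      · intro v _
        by_contra! h
        exact hnot (div_of_simplicial ih hw v
          (fun a b hva hvb hab => h a (Set.mem_univ _) b (Set.mem_univ _) hva hvb hab))
    have hconn : Conn G := fun C hne hcl v => by
      rw [hcore.conn (Set.subset_univ C) hne (fun u hu v _ => hcl u hu v)]
      exact Set.mem_univ v
    obtain ⟨t, a, b, hta, htb, hab⟩ : ∃ t a b, G.Adj t a ∧ G.Adj t b ∧ G.Adj a b := by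
      refine exists_triangle fun htri => hnot (div_of_colorable hw (h3col V G hF htri) ?_)
      intro v
      obtain ⟨u, -, -, -, hu, -⟩ := hcore.no_simplicial v (Set.mem_univ v)
      exact ⟨u, hu⟩
    obtain ⟨Q, hQt, hQ, hnb⟩ := exists_core (fun h => hnot (div_of_antiNbhd hw t h))
    have hb := noBull_of hbull
    have ht : Anti G Q t := fun q hq => hQt hq
    have hst : StableTraces G Q := fun x y hxy hy =>
      hQ.solid.trace_stable hb hcore.prime hxy hy
    rcases hH with hH | hH | hH
    · exact house_false hb (noHouse_of hH) hconn hcore.prime hQ.solid hst ht hta htb hab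
    · exact hammer_false (noHammer_of hH) hconn hQ.solid hnb hst ht hta htb hab
    · exact diamond_false hb (noDiamond_of hH) hconn hcore hQ ht hta htb hab

/-! ### Clique numbers and perfection -/

theorem cliqueNumOn_bdd {V : Type} [Fintype V] (G : SimpleGraph V) (s : Set V) :
    BddAbove {n | ∃ t : Finset V, ↑t ⊆ s ∧ G.IsNClique n t} := by
  refine ⟨Fintype.card V, ?_⟩
  rintro n ⟨t, -, ht⟩
  rw [← ht.card_eq]
  exact Finset.card_le_univ t

theorem card_le_cliqueNumOn {V : Type} [Fintype V] {G : SimpleGraph V} {s : Set V} {K : Finset V}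
    (hK : (K : Set V) ⊆ s) (hKc : G.IsClique (K : Set V)) : K.card ≤ cliqueNumOn G s :=
  le_csSup (cliqueNumOn_bdd G s) ⟨K, hK, hKc, rfl⟩

theorem exists_clique_cliqueNumOn {V : Type} [Fintype V] (G : SimpleGraph V) (s : Set V) :
    ∃ K : Finset V, (K : Set V) ⊆ s ∧ G.IsClique (K : Set V) ∧ K.card = cliqueNumOn G s := by
  obtain ⟨K, hK, hKc, hc⟩ := Nat.sSup_mem (s := {n | ∃ t : Finset V, ↑t ⊆ s ∧ G.IsNClique n t})
    ⟨0, ∅, by simp, by simp⟩ (cliqueNumOn_bdd G s)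
  exact ⟨K, hK, hKc, hc⟩

/-- Weight one on `s` and zero elsewhere turns a weighted colouring into an ordinary one. -/
theorem WPerf.isPerfect {V : Type} [Fintype V] {G : SimpleGraph V} (h : WPerf G Set.univ) :
    IsPerfect G := by
  intro s
  apply le_antisymm
  · obtain ⟨c, hc, hd⟩ := h (fun v => if v ∈ s then 1 else 0) (cliqueNumOn G s) (by
      intro K _ hK
      rw [← Finset.sum_filter, Finset.sum_const, smul_eq_mul, mul_one]
      refine card_le_cliqueNumOn ?_ ?_
      · intro v hv
        exact (Finset.mem_filter.1 hv).2
      · exact hK.subset (by intro v hv; exact (Finset.mem_filter.1 hv).1))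
    have hex : ∀ v : s, ∃ i : Fin (cliqueNumOn G s), (i : ℕ) ∈ c v := by
      intro v
      have := hc v (Set.mem_univ _)
      simp only [v.2, if_true] at this
      obtain ⟨i, hi⟩ := Finset.card_pos.1 (this.2 ▸ Nat.one_pos)
      exact ⟨⟨i, Finset.mem_range.1 (this.1 hi)⟩, hi⟩
    choose g hg using hex
    refine Colorable.chromaticNumber_le ⟨Coloring.mk g ?_⟩
    intro u v huv he
    have hv := hg v
    rw [← he] at hv
    exact Finset.disjoint_left.1 (hd u (Set.mem_univ _) v (Set.mem_univ _) huv) (hg u) hv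
  · obtain ⟨K, hK, hKc, hcard⟩ := exists_clique_cliqueNumOn G s
    have hcl : (G.induce s).IsClique ((K.subtype (· ∈ s) : Finset s) : Set s) := by
      intro u hu v hv huv
      rw [Finset.mem_coe, Finset.mem_subtype] at hu hv
      exact hKc hu hv (fun e => huv (Subtype.ext e))
    have := hcl.card_le_chromaticNumber
    rw [Finset.card_subtype, Finset.filter_true_of_mem (fun v hv => hK hv), hcard] at this
    exact this

theorem WPerf.induce {V : Type} {G : SimpleGraph V} {A : Set V} (h : WPerf G A) :
    WPerf (G.induce A) Set.univ := by
  rcases A.eq_empty_or_nonempty with rfl | ⟨a, ha⟩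
  · exact WPerf.of_bipartite Set.univ (fun u => u.2.elim) (fun u => u.2.elim)
  · have hφ : ∀ v (hv : v ∈ A), (fun v => if h : v ∈ A then (⟨v, h⟩ : A) else ⟨a, ha⟩) v = ⟨v, hv⟩ :=
      fun v hv => dif_pos hv
    refine (h.map (G' := G.induce A) (fun v => if h : v ∈ A then (⟨v, h⟩ : A) else ⟨a, ha⟩)
      ?_ ?_).mono ?_
    · intro u hu v hv huv
      rw [hφ u hu, hφ v hv] at huv
      exact congrArg Subtype.val huv
    · intro u hu v hv
      rw [dif_pos hu, dif_pos hv]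
      rfl
    · intro v _
      exact ⟨v, v.2, hφ v v.2⟩

end main

/-- If every (F, C₃)-free graph is 3-colorable, then every (F, bull, H)-free graph is
perfectly divisible, where `H` is one of house, hammer, diamond. -/
theorem F_bull_H_free_perfectlyDivisible {γ : Type} [Fintype γ] (F : SimpleGraph γ)
    (h3col : ∀ (V : Type) [Fintype V] (G : SimpleGraph V),
        IsFree G F → IsFree G (SimpleGraph.cycleGraph 3) → G.Colorable 3)
    {V : Type} [Fintype V] (G : SimpleGraph V)
    (hF : IsFree G F) (hbull : IsFree G bull)
    (hH : IsFree G house ∨ IsFree G hammer ∨ IsFree G diamond) :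
    PerfectlyDivisible G := by
  classical
  intro s hs
  have : Nonempty s := hs.to_subtype
  obtain ⟨P, hPs, hP, hL⟩ : WDiv G s (fun _ => 1) :=
    WDiv.of_induce (wdiv_univ F h3col _ s (G.induce s) rfl (hF.induce s)
      (hbull.induce s) (hH.imp (·.induce s) (Or.imp (·.induce s) (·.induce s))) _
      (fun _ => Nat.one_pos))
  refine ⟨P, s \ P, Set.union_sdiff_cancel hPs, Set.inter_sdiff_self _ _, hP.induce.isPerfect, ?_⟩
  obtain ⟨L, hLs, hLc, hcard⟩ := exists_clique_cliqueNumOn G (s \ P)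
  obtain ⟨K, hK, hKc, hlt⟩ := hL L hLs hLc
  rw [← hcard]
  refine lt_of_lt_of_le ?_ (card_le_cliqueNumOn hK hKc)
  simpa using hlt
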